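/- arXiv:1709.07998 — 5 statements merged into one kernel-verified Lean document; each statement's English description precedes it below -/
import Mathlib

section
/- If X is a weakly countably tight Lindelöf Hausdorff space with countable pseudocharacter, then |X| ≤ 𝔠 (the cardinality of the continuum). -/
open Cardinal Set TopologicalSpace

universe u

/-- The tightness `t(X)`: the least infinite cardinal `κ` such that whenever
`x ∈ closure A` there is `B ⊆ A` with `#B ≤ κ` and `x ∈ closure B`. -/
noncomputable def tightness (X : Type u) [TopologicalSpace X] : Cardinal.{u} :=
  sInf {κ : Cardinal.{u} | ℵ₀ ≤ κ ∧ ∀ (A : Set X) (x : X), x ∈ closure A →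
    ∃ B ⊆ A, #B ≤ κ ∧ x ∈ closure B}

/-- The `κ`-closure of a set `A`. -/
noncomputable def clk {X : Type u} [TopologicalSpace X] (κ : Cardinal.{u}) (A : Set X) : Set X :=
  ⋃ (B : Set X) (_ : B ⊆ A ∧ #B ≤ κ), closure B

/-- A cover `𝒞` witnessing that `wt X ≤ κ`. -/
noncomputable def IsWtWitness {X : Type u} [TopologicalSpace X] (κ : Cardinal.{u}) (𝒞 : Set (Set X)) : Prop :=
  ⋃₀ 𝒞 = Set.univ ∧ #𝒞 ≤ 2 ^ κ ∧ ∀ C ∈ 𝒞, tightness ↥C ≤ κ ∧ clk (2 ^ κ) C = Set.univ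

/-- The weak tightness `wt(X)`. -/
noncomputable def wt (X : Type u) [TopologicalSpace X] : Cardinal.{u} :=
  sInf {κ : Cardinal.{u} | ℵ₀ ≤ κ ∧ ∃ 𝒞 : Set (Set X), IsWtWitness κ 𝒞}

/-- The Lindelöf number `L(X)`. -/
noncomputable def LindelofNumber (X : Type u) [TopologicalSpace X] : Cardinal.{u} :=
  sInf {κ : Cardinal.{u} | ℵ₀ ≤ κ ∧ ∀ 𝒰 : Set (Set X), (∀ U ∈ 𝒰, IsOpen U) →
    ⋃₀ 𝒰 = Set.univ → ∃ 𝒱 ⊆ 𝒰, #𝒱 ≤ κ ∧ ⋃₀ 𝒱 = Set.univ}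

/-- The pseudocharacter `ψ(X)`. -/
noncomputable def psi (X : Type u) [TopologicalSpace X] : Cardinal.{u} :=
  sInf {κ : Cardinal.{u} | ℵ₀ ≤ κ ∧ ∀ x : X, ∃ 𝒰 : Set (Set X),
    #𝒰 ≤ κ ∧ (∀ U ∈ 𝒰, IsOpen U ∧ x ∈ U) ∧ ⋂₀ 𝒰 = {x}}

/-- The closed pseudocharacter `ψ_c(X)`. -/
noncomputable def psic (X : Type u) [TopologicalSpace X] : Cardinal.{u} :=
  sInf {κ : Cardinal.{u} | ℵ₀ ≤ κ ∧ ∀ x : X, ∃ 𝒰 : Set (Set X),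
    #𝒰 ≤ κ ∧ (∀ U ∈ 𝒰, IsOpen U ∧ x ∈ U) ∧ (⋂ U ∈ 𝒰, closure U) = {x}}

/-- `A` is `𝒞`-saturated: `A ∩ C` is dense in `A` for every `C ∈ 𝒞`. -/
noncomputable def Saturated {X : Type u} [TopologicalSpace X] (𝒞 : Set (Set X)) (A : Set X) : Prop :=
  ∀ C ∈ 𝒞, A ⊆ closure (A ∩ C)

/-- The π-character `πχ(x, X)` of a point: least cardinality of a local π-base at `x`. -/
noncomputable def piCharPt {X : Type u} [TopologicalSpace X] (x : X) : Cardinal.{u} :=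
  sInf {κ : Cardinal.{u} | ∃ ℬ : Set (Set X), #ℬ ≤ κ ∧
    (∀ B ∈ ℬ, IsOpen B ∧ B.Nonempty) ∧ ∀ U : Set X, IsOpen U → x ∈ U → ∃ B ∈ ℬ, B ⊆ U}

/-- The π-character `πχ(X)`. -/
noncomputable def piChar (X : Type u) [TopologicalSpace X] : Cardinal.{u} :=
  ⨆ x : X, piCharPt x

/-- The character `χ(x, X)` of a point: least cardinality of a local base at `x`. -/
noncomputable def charPt {X : Type u} [TopologicalSpace X] (x : X) : Cardinal.{u} :=
  sInf {κ : Cardinal.{u} | ∃ ℬ : Set (Set X), #ℬ ≤ κ ∧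
    (∀ B ∈ ℬ, IsOpen B ∧ x ∈ B) ∧ ∀ U : Set X, IsOpen U → x ∈ U → ∃ B ∈ ℬ, B ⊆ U}

/-- The character `χ(X)`. -/
noncomputable def character (X : Type u) [TopologicalSpace X] : Cardinal.{u} :=
  ⨆ x : X, charPt x

/-- The density `d(X)`: least cardinality of a dense subset. -/
noncomputable def density (X : Type u) [TopologicalSpace X] : Cardinal.{u} :=
  sInf {κ : Cardinal.{u} | ∃ D : Set X, Dense D ∧ #D ≤ κ}

/-- A space is homogeneous if its homeomorphism group acts transitively. -/
noncomputable def Homogeneous (X : Type u) [TopologicalSpace X] : Prop :=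
  ∀ x y : X, ∃ h : X ≃ₜ X, h x = y

/-- A space is power homogeneous if some (nonempty) power of it is homogeneous. -/
noncomputable def PowerHomogeneous (X : Type u) [TopologicalSpace X] : Prop :=
  ∃ I : Type u, Nonempty I ∧ Homogeneous (I → X)

/-- A `G^c_κ`-set: `G = ⋂𝒰 = ⋂_{U ∈ 𝒰} closure U` for a family `𝒰` of `≤ κ` open sets. -/
noncomputable def GcSet {X : Type u} [TopologicalSpace X] (κ : Cardinal.{u}) (G : Set X) : Prop :=
  ∃ 𝒰 : Set (Set X), #𝒰 ≤ κ ∧ (∀ U ∈ 𝒰, IsOpen U) ∧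
    G = ⋂₀ 𝒰 ∧ G = ⋂ U ∈ 𝒰, closure U

/-- A subset is subseparable if it is contained in the closure of a countable set. -/
noncomputable def Subseparable {X : Type u} [TopologicalSpace X] (A : Set X) : Prop :=
  ∃ c : Set X, c.Countable ∧ A ⊆ closure c

/-- The infimum defining the tightness of a space is attained. -/
theorem exists_subset_mem_closure_of_tightness_le {Y : Type u} [TopologicalSpace Y]
    {κ : Cardinal.{u}} (h : tightness Y ≤ κ) {A : Set Y} {x : Y} (hx : x ∈ closure A) :
    ∃ B ⊆ A, #B ≤ κ ∧ x ∈ closure B := by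
  have hne : {κ : Cardinal.{u} | ℵ₀ ≤ κ ∧ ∀ (A : Set Y) (x : Y), x ∈ closure A →
      ∃ B ⊆ A, #B ≤ κ ∧ x ∈ closure B}.Nonempty :=
    ⟨max ℵ₀ #Y, le_max_left _ _, fun A x hx =>
      ⟨A, subset_rfl, (mk_set_le A).trans (le_max_right _ _), hx⟩⟩
  obtain ⟨B, hBA, hB, hxB⟩ := (csInf_mem hne).2 A x hx
  exact ⟨B, hBA, hB.trans h, hxB⟩

/-- A nonzero value of the weak tightness is attained by some cover. -/
theorem exists_isWtWitness {X : Type u} [TopologicalSpace X] (h : wt X ≠ 0) :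
    ∃ 𝒞 : Set (Set X), IsWtWitness (wt X) 𝒞 := by
  have hne : {κ : Cardinal.{u} | ℵ₀ ≤ κ ∧ ∃ 𝒞 : Set (Set X), IsWtWitness κ 𝒞}.Nonempty := by
    by_contra hne
    rw [Set.not_nonempty_iff_eq_empty] at hne
    exact h (by rw [wt, hne, Cardinal.sInf_empty])
  exact (csInf_mem hne).2

/-- Given at most `𝔠` many operations of countable arity, every point lies in a set of cardinality
at most `𝔠` which is closed under all of them. -/
theorem exists_mk_le_continuum_closed_under {X ι : Type u} (hι : #ι ≤ 𝔠)
    (op : ι → (ℕ → X) → X) (x₀ : X) :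
    ∃ H : Set X, #H ≤ 𝔠 ∧ x₀ ∈ H ∧ ∀ i s, (∀ n, s n ∈ H) → op i s ∈ H := by
  let β : Option ι → Type := fun o => o.elim Empty fun _ => ℕ
  let ev : WType β → X := WType.elim X fun a => match a with
    | ⟨none, _⟩ => x₀
    | ⟨some i, s⟩ => op i s
  refine ⟨Set.range ev, mk_range_le.trans (WType.cardinalMk_le_of_le' ?_),
    ⟨⟨none, Empty.elim⟩, rfl⟩, fun i s hs => ?_⟩
  · calc (Cardinal.sum fun a : Option ι => (𝔠 : Cardinal.{u}) ^ Cardinal.lift.{u} #(β a))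
        ≤ Cardinal.sum fun _ : Option ι => (𝔠 : Cardinal.{u}) := by
          refine Cardinal.sum_le_sum _ _ fun a => ?_
          cases a with
          | none => simpa [β] using (nat_lt_continuum 1).le
          | some i => simp [β]
      _ = #(Option ι) * 𝔠 := by simp
      _ ≤ 𝔠 * 𝔠 := by
          gcongr
          rw [mk_option]
          exact add_le_of_le aleph0_le_continuum hι (nat_lt_continuum 1 |>.le.trans' (by simp))
      _ = 𝔠 := continuum_mul_self
  · choose w hw using hs
    refine ⟨⟨some i, w⟩, ?_⟩
    change op i (fun n => ev (w n)) = _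
    simp only [hw]

/-- In a Lindelöf Hausdorff space, every open neighbourhood of a point contains the intersection of
the closures of countably many open neighbourhoods of the point. -/
theorem exists_countable_sInter_closure_subset {X : Type u} [TopologicalSpace X] [T2Space X]
    [LindelofSpace X] {x : X} {U : Set X} (hU : IsOpen U) (hx : x ∈ U) :
    ∃ 𝒱 : Set (Set X), 𝒱.Countable ∧ (∀ V ∈ 𝒱, IsOpen V ∧ x ∈ V) ∧
      ⋂ V ∈ 𝒱, closure V ⊆ U := by
  have hsep : ∀ y : X, ∃ N M : Set X, IsOpen N ∧ IsOpen M ∧ (y ∈ Uᶜ → y ∈ N) ∧ x ∈ M ∧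
      Disjoint N M := by
    intro y
    by_cases hy : y ∈ U
    · exact ⟨∅, Set.univ, isOpen_empty, isOpen_univ, fun h => (h hy).elim, trivial,
        Set.empty_disjoint _⟩
    · obtain ⟨N, M, hN, hM, hyN, hxM, hd⟩ :=
        t2_separation (show y ≠ x from fun h => hy (h ▸ hx))
      exact ⟨N, M, hN, hM, fun _ => hyN, hxM, hd⟩
  choose N M hN hM hyN hxM hd using hsep
  obtain ⟨t, ht, -, hcov⟩ := hU.isClosed_compl.isLindelof.elim_nhds_subcover N
    fun y hy => (hN y).mem_nhds (hyN y hy)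
  refine ⟨M '' t, ht.image M, ?_, fun z hz => ?_⟩
  · rintro _ ⟨y, -, rfl⟩
    exact ⟨hM y, hxM y⟩
  · by_contra hzU
    obtain ⟨y, hy, hzN⟩ := Set.mem_iUnion₂.1 (hcov hzU)
    exact Set.disjoint_left.1 ((hd y).closure_right (hN y)) hzN
      (Set.mem_iInter₂.1 hz _ (Set.mem_image_of_mem M hy))

/-- In a Lindelöf Hausdorff space, countable pseudocharacter at a point implies countable closed
pseudocharacter at that point. -/
theorem exists_seq_open_iInter_closure_subset {X : Type u} [TopologicalSpace X] [T2Space X]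
    [LindelofSpace X] {x : X} {𝒰 : Set (Set X)} (hc : 𝒰.Countable)
    (hU : ∀ U ∈ 𝒰, IsOpen U ∧ x ∈ U) (hx : ⋂₀ 𝒰 = {x}) :
    ∃ W : ℕ → Set X, (∀ n, IsOpen (W n) ∧ x ∈ W n) ∧ ⋂ n, closure (W n) ⊆ {x} := by
  choose! 𝒱 h𝒱c h𝒱 h𝒱U using fun U (h : U ∈ 𝒰) =>
    exists_countable_sInter_closure_subset (hU U h).1 (hU U h).2
  have hcount : (insert Set.univ (⋃ U ∈ 𝒰, 𝒱 U)).Countable := (hc.biUnion h𝒱c).insert _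
  obtain ⟨W, hW⟩ := hcount.exists_eq_range (Set.insert_nonempty _ _)
  refine ⟨W, fun n => ?_, fun z hz => ?_⟩
  · have hn : W n ∈ insert Set.univ (⋃ U ∈ 𝒰, 𝒱 U) := hW ▸ Set.mem_range_self n
    rcases hn with hn | hn
    · rw [hn]
      exact ⟨isOpen_univ, trivial⟩
    · obtain ⟨U, hU', hn⟩ := Set.mem_iUnion₂.1 hn
      exact h𝒱 U hU' _ hn
  · rw [← hx]
    refine fun U hU' => h𝒱U U hU' (Set.mem_iInter₂.2 fun V hV => ?_)
    have hVW : V ∈ Set.range W := hW ▸ Or.inr (Set.mem_biUnion hU' hV)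
    obtain ⟨n, rfl⟩ := hVW
    exact Set.mem_iInter.1 hz n

/-- A point of the closure of a saturated set `H` is the only common point of the closures of a
sequence of countable subsets of `H`. -/
theorem Saturated.exists_iInter_closure_range_eq {X : Type u} [TopologicalSpace X]
    {𝒞 : Set (Set X)} {H : Set X} (hH : Saturated 𝒞 H) {C : Set X} (hC : C ∈ 𝒞)
    (ht : tightness C ≤ ℵ₀) {x : X} (hxC : x ∈ C) (hx : x ∈ closure H) {W : ℕ → Set X}
    (hW : ∀ n, IsOpen (W n) ∧ x ∈ W n) (hWx : ⋂ n, closure (W n) ⊆ {x}) :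
    ∃ s : ℕ → X, (∀ n, s n ∈ H) ∧
      ⋂ m, closure (Set.range fun n => s (Nat.pair m n)) = {x} := by
  have key : ∀ m, ∃ f : ℕ → X, (∀ n, f n ∈ H ∩ W m) ∧ x ∈ closure (Set.range f) := by
    intro m
    have hx' : x ∈ closure (H ∩ C) := closure_minimal (hH C hC) isClosed_closure hx
    have hxm : (⟨x, hxC⟩ : C) ∈ closure ((↑) ⁻¹' (W m ∩ H) : Set C) := by
      rw [closure_subtype, Subtype.image_preimage_coe, Set.inter_left_comm, Set.inter_comm C H]
      exact (hW m).1.inter_closure ⟨(hW m).2, hx'⟩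
    obtain ⟨B, hBA, hB, hxB⟩ := exists_subset_mem_closure_of_tightness_le ht hxm
    have hBne : B.Nonempty := closure_nonempty_iff.1 ⟨_, hxB⟩
    obtain ⟨f, rfl⟩ := (le_aleph0_iff_set_countable.1 hB).exists_eq_range hBne
    refine ⟨fun n => f n, fun n => (hBA (Set.mem_range_self n)).symm, ?_⟩
    rw [closure_subtype, ← Set.range_comp] at hxB
    exact hxB
  choose f hf hxf using key
  refine ⟨fun k => f k.unpair.1 k.unpair.2, fun n => (hf _ _).1, ?_⟩
  simp only [Nat.unpair_pair]
  refine Set.Subset.antisymm (Set.Subset.trans (Set.iInter_mono fun m => closure_mono ?_) hWx) ?_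
  · rintro _ ⟨n, rfl⟩
    exact (hf m n).2
  · rintro _ rfl
    exact Set.mem_iInter.2 hxf

/-- In a space whose weak tightness is witnessed by `𝒞`, every point of the space is in the closure
of a family of points of `C ∈ 𝒞` indexed by any given type of cardinality `2 ^ κ`. -/
theorem IsWtWitness.exists_mem_closure_range {X T : Type u} [TopologicalSpace X]
    {κ : Cardinal.{u}} {𝒞 : Set (Set X)} (h𝒞 : IsWtWitness κ 𝒞) (hT : #T = 2 ^ κ)
    {C : Set X} (hC : C ∈ 𝒞) (x : X) :
    ∃ b : T → X, (∀ r, b r ∈ C) ∧ x ∈ closure (Set.range b) := by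
  have hx : x ∈ clk (2 ^ κ) C := (h𝒞.2.2 C hC).2 ▸ Set.mem_univ x
  obtain ⟨B, ⟨hBC, hB⟩, hxB⟩ := Set.mem_iUnion₂.1 hx
  have hBne : Nonempty B := (closure_nonempty_iff.1 ⟨x, hxB⟩).to_subtype
  obtain ⟨g⟩ : Nonempty (B ↪ T) := Cardinal.le_def _ _ |>.1 (hT ▸ hB)
  refine ⟨fun r => (Function.invFun g r : B), fun r => hBC (Subtype.prop _),
    closure_mono (fun y hy => ?_) hxB⟩
  exact ⟨g ⟨y, hy⟩, by simp [Function.leftInverse_invFun g.injective _]⟩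

/-- Corollary 2.9. -/
theorem stmt4 {X : Type u} [TopologicalSpace X] [T2Space X] [LindelofSpace X]
    (hwt : wt X = ℵ₀)
    (hpsi : ∀ x : X, ∃ 𝒰 : Set (Set X), 𝒰.Countable ∧
      (∀ U ∈ 𝒰, IsOpen U ∧ x ∈ U) ∧ ⋂₀ 𝒰 = {x}) :
    #X ≤ Cardinal.continuum := by
  classical
  obtain hX | ⟨⟨x₀⟩⟩ := isEmpty_or_nonempty X
  · simp
  obtain ⟨𝒞, h𝒞⟩ := exists_isWtWitness (hwt ▸ aleph0_ne_zero)
  rw [hwt] at h𝒞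
  have hW : ∀ x : X, ∃ W : ℕ → Set X, (∀ n, IsOpen (W n) ∧ x ∈ W n) ∧
      ⋂ n, closure (W n) ⊆ {x} := fun x =>
    let ⟨_, hc, hU, hx⟩ := hpsi x
    exists_seq_open_iInter_closure_subset hc hU hx
  choose W hW hWx using hW
  let T : Type u := ULift.{u} (ℕ → ℕ)
  have hT : #T = 2 ^ (ℵ₀ : Cardinal.{u}) := by simp [T]
  choose b hbC hxb using fun (C : 𝒞) (x : X) => h𝒞.exists_mem_closure_range hT C.2 x
  let op : (𝒞 × T) ⊕ T ⊕ PUnit.{u + 1} → (ℕ → X) → X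
    | .inl (C, r), s => b C (s 0) r
    | .inr (.inl k), s => if h : ∃ y, y ∉ ⋃ n, W (s n) (k.down n) then h.choose else s 0
    | .inr (.inr _), s =>
      if h : ∃ x, ⋂ m, closure (Set.range fun n => s (Nat.pair m n)) = {x} then h.choose else s 0
  obtain ⟨H, hHc, hx₀, hop⟩ := exists_mk_le_continuum_closed_under (X := X) (by
    rw [two_power_aleph0] at hT
    simp only [mk_sum, mk_prod, lift_id, hT, mk_punit]
    have h1 : (1 : Cardinal.{u}) ≤ 𝔠 := by exact_mod_cast (nat_lt_continuum 1).le
    refine add_le_of_le aleph0_le_continuum ?_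
      (add_le_of_le aleph0_le_continuum le_rfl h1)
    refine mul_le_of_le aleph0_le_continuum ?_ le_rfl
    simpa using h𝒞.2.1) op x₀
  have hsat : Saturated 𝒞 H := fun C hC x hx => by
    refine closure_mono ?_ (hxb ⟨C, hC⟩ x)
    rintro _ ⟨r, rfl⟩
    exact ⟨hop (.inl (⟨C, hC⟩, r)) (fun _ => x) fun _ => hx, hbC ⟨C, hC⟩ x r⟩
  have hclosed : IsClosed H := by
    refine isClosed_of_closure_subset fun x hx => ?_
    obtain ⟨C, hC, hxC⟩ : x ∈ ⋃₀ 𝒞 := h𝒞.1 ▸ Set.mem_univ x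
    obtain ⟨s, hsH, hs⟩ :=
      hsat.exists_iInter_closure_range_eq hC (h𝒞.2.2 C hC).1 hxC hx (hW x) (hWx x)
    have h : ∃ x, ⋂ m, closure (Set.range fun n => s (Nat.pair m n)) = {x} := ⟨x, hs⟩
    have hmem := hop (.inr (.inr ⟨⟩)) s hsH
    simp only [op, dif_pos h] at hmem
    rwa [Set.singleton_injective (hs.symm.trans h.choose_spec)]
  suffices H = Set.univ by rwa [this, mk_univ] at hHc
  refine Set.eq_univ_of_forall fun p => by_contra fun hp => ?_
  have hk : ∀ x ∈ H, ∃ n, p ∉ W x n := by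
    intro x hx
    by_contra! hn
    exact hp (Set.mem_singleton_iff.1
      (hWx x (Set.mem_iInter.2 fun n => subset_closure (hn n))) ▸ hx)
  choose! k hk using hk
  obtain ⟨t, ht, htH, hcov⟩ := hclosed.isLindelof.elim_nhds_subcover (fun x => W x (k x))
    fun x _ => (hW x (k x)).1.mem_nhds (hW x (k x)).2
  have htne : t.Nonempty := by
    obtain ⟨y, hy, -⟩ := Set.mem_iUnion₂.1 (hcov hx₀)
    exact ⟨y, hy⟩
  obtain ⟨e, rfl⟩ := ht.exists_eq_range htne
  have he : ∀ n, e n ∈ H := fun n => htH _ (Set.mem_range_self n)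
  have h : ∃ y, y ∉ ⋃ n, W (e n) (k (e n)) :=
    ⟨p, fun hpe => let ⟨n, hn⟩ := Set.mem_iUnion.1 hpe; hk _ (he n) hn⟩
  have hmem := hop (.inr (.inl ⟨fun n => k (e n)⟩)) e he
  simp only [op, dif_pos h] at hmem
  exact h.choose_spec (by simpa using hcov hmem)
end

section
/- Let X be a power homogeneous compactum and κ an infinite cardinal. If the set D = {x ∈ X : πχ(x,X) ≤ κ} is dense in X, then πχ(X) ≤ κ. -/
open Cardinal Set TopologicalSpace

universe u

/-- `ℬ` is a local π-base at `x`. -/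
def IsLocalPiBase {X : Type u} [TopologicalSpace X] (x : X) (ℬ : Set (Set X)) : Prop :=
  (∀ B ∈ ℬ, IsOpen B ∧ B.Nonempty) ∧ ∀ U : Set X, IsOpen U → x ∈ U → ∃ B ∈ ℬ, B ⊆ U

theorem piCharPt_le_iff {X : Type u} [TopologicalSpace X] {x : X} {κ : Cardinal.{u}} :
    piCharPt x ≤ κ ↔ ∃ ℬ : Set (Set X), #ℬ ≤ κ ∧ IsLocalPiBase x ℬ := by
  refine ⟨fun h => ?_, fun h => csInf_le' h⟩
  have hne : {κ : Cardinal.{u} | ∃ ℬ : Set (Set X), #ℬ ≤ κ ∧ IsLocalPiBase x ℬ}.Nonempty :=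
    ⟨_, {U | IsOpen U ∧ U.Nonempty}, le_rfl, fun B hB => hB,
      fun U hU hx => ⟨U, ⟨hU, x, hx⟩, Subset.rfl⟩⟩
  obtain ⟨ℬ, hc, hb⟩ := csInf_mem hne
  exact ⟨ℬ, hc.trans h, hb⟩

/-- A compact subset of an open set in a product is separated from the complement of the open set
by finitely many coordinates. -/
theorem IsCompact.exists_finset_forall_eqOn {I : Type*} {X : I → Type*}
    [∀ i, TopologicalSpace (X i)] {K U : Set (∀ i, X i)} (hK : IsCompact K) (hU : IsOpen U)
    (hKU : K ⊆ U) :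
    ∃ F : Finset I, ∀ a ∈ K, ∀ b : ∀ i, X i, (∀ i ∈ F, a i = b i) → b ∈ U := by
  classical
  refine hK.induction_on (p := fun s => ∃ F : Finset I, ∀ a ∈ s, ∀ b : ∀ i, X i,
    (∀ i ∈ F, a i = b i) → b ∈ U) ⟨∅, by simp⟩ ?_ ?_ ?_
  · rintro s t hst ⟨F, hF⟩
    exact ⟨F, fun a ha => hF a (hst ha)⟩
  · rintro s t ⟨F, hF⟩ ⟨G, hG⟩
    refine ⟨F ∪ G, ?_⟩
    rintro a (ha | ha) b hb
    · exact hF a ha b fun i hi => hb i (Finset.mem_union_left _ hi)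
    · exact hG a ha b fun i hi => hb i (Finset.mem_union_right _ hi)
  · intro a ha
    obtain ⟨F, u, hu, hsub⟩ := isOpen_pi_iff.1 hU a (hKU ha)
    refine ⟨(F : Set I).pi u, mem_nhdsWithin_of_mem_nhds
      ((isOpen_set_pi F.finite_toSet fun i hi => (hu i hi).1).mem_nhds fun i hi => (hu i hi).2),
      F, fun c hc b hb => hsub fun i hi => ?_⟩
    rw [← hb i hi]
    exact hc i hi

open Classical in
theorem continuous_piecewise_const_right {I : Type*} {X : Type*} [TopologicalSpace X]
    (J : Set I) : Continuous fun q : (I → X) × (I → X) => J.piecewise q.1 q.2 := by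
  refine continuous_pi fun i => ?_
  by_cases hi : i ∈ J
  · simp only [Set.piecewise, hi, if_true]; fun_prop
  · simp only [Set.piecewise, hi, if_false]; fun_prop

theorem mk_finset_le {J : Type u} {κ : Cardinal.{u}} (hκ : ℵ₀ ≤ κ) (hJ : #J ≤ κ) :
    #(Finset J) ≤ κ := by
  rcases finite_or_infinite J with h | h
  · exact mk_le_aleph0.trans hκ
  · rwa [mk_finset_of_infinite]

theorem mk_iUnion_le_of_le {J : Type u} {I : Type u} {κ : Cardinal.{u}} (hκ : ℵ₀ ≤ κ)
    (hJ : #J ≤ κ) (s : J → Set I) (hs : ∀ j, #(s j) ≤ κ) : #(⋃ j, s j : Set I) ≤ κ :=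
  (mk_iUnion_le_sum_mk).trans ((sum_le_sum _ (fun _ => κ) hs).trans
    (by rw [sum_const']; exact mul_le_of_le hκ hJ le_rfl))

open Classical in
/-- An open map on a power of a compact space depends on at most `κ` coordinates at each point whose
image has a local π-base of size at most `κ`. -/
theorem IsOpenMap.exists_determining_coords {I X Y : Type u} [TopologicalSpace X] [CompactSpace X]
    [TopologicalSpace Y] [T2Space Y] [RegularSpace Y] {f : (I → X) → Y} (hf : Continuous f)
    (hfo : IsOpenMap f) {κ : Cardinal.{u}} (hκ : ℵ₀ ≤ κ) (p : I → X) (hp : piCharPt (f p) ≤ κ) :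
    ∃ J : Set I, #J ≤ κ ∧ ∀ z : I → X, (∀ i ∈ J, z i = p i) → f z = f p := by
  obtain ⟨ℬ, hc, hopen, hbase⟩ := piCharPt_le_iff.1 hp
  have key : ∀ B : ℬ, ∃ y ∈ B.1, ∃ C, IsOpen C ∧ y ∈ C ∧ ∃ F : Finset I,
      ∀ a, f a ∈ C → ∀ b : I → X, (∀ i ∈ F, a i = b i) → f b ∈ B.1 := by
    rintro ⟨B, hB⟩
    obtain ⟨y, hy⟩ := (hopen B hB).2
    obtain ⟨C, hCn, hCc, hCB⟩ :=
      exists_mem_nhds_isClosed_subset ((hopen B hB).1.mem_nhds hy)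
    obtain ⟨F, hF⟩ := (hCc.preimage hf).isCompact.exists_finset_forall_eqOn
      ((hopen B hB).1.preimage hf) (preimage_mono hCB)
    exact ⟨y, hy, interior C, isOpen_interior, mem_interior_iff_mem_nhds.2 hCn, F,
      fun a ha b hb => hF a (interior_subset (s := C) ha) b hb⟩
  choose y hyB C hC hyC F hF using key
  refine ⟨⋃ B : ℬ, (F B : Set I), ?_, fun z hz => ?_⟩
  · exact mk_iUnion_le_of_le hκ hc _ fun B => (F B).finite_toSet.lt_aleph0.le.trans hκ
  · by_contra hne
    obtain ⟨W', W, hW', hW, hzW', hpW, hdisj⟩ := t2_separation hne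
    set J : Set I := ⋃ B : ℬ, (F B : Set I)
    have hm : Continuous fun a : I → X => J.piecewise a z :=
      (continuous_piecewise_const_right J).comp (by fun_prop : Continuous fun a => (a, z))
    have hmp : J.piecewise p z = z := by
      ext i
      by_cases hi : i ∈ J <;> simp [hi]
      exact (hz i hi).symm
    set N : Set (I → X) := f ⁻¹' W ∩ (fun a => f (J.piecewise a z)) ⁻¹' W'
    have hN : IsOpen N := (hW.preimage hf).inter (hW'.preimage (hf.comp hm))
    obtain ⟨B, hB, hBN⟩ := hbase (f '' N) (hfo N hN)
      ⟨p, ⟨hpW, by simpa only [mem_preimage, hmp] using hzW'⟩, rfl⟩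
    obtain ⟨a, haN, hay⟩ := hBN (hyB ⟨B, hB⟩)
    have hb : f (J.piecewise a z) ∈ B := hF ⟨B, hB⟩ a (hay ▸ hyC ⟨B, hB⟩) _ fun i hi => by
      rw [Set.piecewise_eq_of_mem]
      exact mem_iUnion.2 ⟨⟨B, hB⟩, hi⟩
    obtain ⟨c, hc, hcb⟩ := hBN hb
    exact hdisj.le_bot ⟨haN.2, show f (J.piecewise a z) ∈ W from hcb ▸ hc.1⟩

/-- Closing off a set of size at most `κ` under a set-valued operation on finite sets. -/
theorem exists_closed_under_finset_operation {I : Type u} {κ : Cardinal.{u}} (hκ : ℵ₀ ≤ κ)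
    (G : Finset I → Set I) (hG : ∀ F, #(G F) ≤ κ) :
    ∃ J : Set I, #J ≤ κ ∧ ∀ F : Finset I, (F : Set I) ⊆ J → G F ⊆ J := by
  classical
  let step : Set I → Set I := fun J => J ∪ ⋃ F : Finset J, G (F.map (Function.Embedding.subtype _))
  let S : ℕ → Set I := fun n => step^[n] ∅
  have hS : ∀ n, S (n + 1) = step (S n) := fun n => Function.iterate_succ_apply' _ _ _
  have hmono : Monotone S := monotone_nat_of_le_succ fun n => by
    rw [hS]; exact subset_union_left
  have hcard : ∀ n, #(S n) ≤ κ := by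
    intro n
    induction n with
    | zero => simp [S]
    | succ n ih =>
      rw [hS]
      refine (mk_union_le _ _).trans (add_le_of_le hκ ih (mk_iUnion_le_of_le hκ ?_ _ fun F => hG _))
      exact mk_finset_le hκ ih
  refine ⟨⋃ n, S n, ?_, fun F hF => ?_⟩
  · have := mk_iUnion_le_of_le (J := ULift.{u} ℕ) hκ (by simpa using hκ) (fun n => S n.down)
      fun n => hcard _
    refine (mk_le_mk_of_subset ?_).trans this
    exact iUnion_subset fun n => subset_iUnion (fun n : ULift.{u} ℕ => S n.down) ⟨n⟩
  · obtain ⟨n, hn⟩ := hmono.directed_le.exists_mem_subset_of_finset_subset_biUnion hF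
    refine Subset.trans ?_ (subset_iUnion S (n + 1))
    rw [hS]
    refine Subset.trans ?_ subset_union_right
    have hmap : (F.subtype (· ∈ S n)).map (Function.Embedding.subtype _) = F :=
      Finset.subtype_map_of_mem fun i hi => hn hi
    intro i hi
    exact mem_iUnion.2 ⟨F.subtype (· ∈ S n), by rw [hmap]; exact hi⟩

theorem mk_pi_finset_le {I C : Type u} {κ : Cardinal.{u}} (hκ : ℵ₀ ≤ κ) (hC : #C ≤ κ)
    (F : Finset I) : #(F → C) ≤ κ := by
  rw [← power_def]
  refine (power_le_power_right hC).trans ?_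
  rw [mk_coe_finset, power_natCast]
  exact power_nat_le hκ

open Classical in
/-- If an open map on a power of a compactum takes values of π-character at most `κ` on a dense set,
then the image of a constant point of π-character at most `κ` has π-character at most `κ`. -/
theorem IsOpenMap.piCharPt_le {I X Y : Type u} [TopologicalSpace X] [CompactSpace X]
    [TopologicalSpace Y] [T2Space Y] [RegularSpace Y] {f : (I → X) → Y} (hf : Continuous f)
    (hfo : IsOpenMap f) {κ : Cardinal.{u}} (hκ : ℵ₀ ≤ κ) (hd : Dense {y : Y | piCharPt y ≤ κ})
    (d : X) (hdκ : piCharPt d ≤ κ) : piCharPt (f fun _ => d) ≤ κ := by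
  obtain ⟨ℬ, hc, hopen, hbase⟩ := piCharPt_le_iff.1 hdκ
  set p : I → X := fun _ => d with hp
  let box : (F : Finset I) → (F → ℬ) → Set (I → X) := fun F s => {z | ∀ i : F, z i ∈ (s i).1}
  have hbox : ∀ F s, IsOpen (box F s) := fun F s => by
    simp only [box, ofPred_forall]
    exact isOpen_iInter_of_finite fun i => (hopen _ (s i).2).1.preimage (continuous_apply i.1)
  have hboxne : ∀ F s, (box F s).Nonempty := fun F s => by
    choose g hg using fun i : F => (hopen _ (s i).2).2
    refine ⟨fun i => if h : i ∈ F then g ⟨i, h⟩ else d, fun i => ?_⟩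
    simpa using hg i
  have hexbox : ∀ (F : Finset I) (u : I → Set X), (∀ i ∈ F, IsOpen (u i) ∧ d ∈ u i) →
      ∃ s : F → ℬ, ∀ i : F, (s i).1 ⊆ u i := fun F u hu => by
    choose s hs hsu using fun i : F => hbase (u i) (hu i i.2).1 (hu i i.2).2
    exact ⟨fun i => ⟨s i, hs i⟩, hsu⟩
  have hpt : ∀ F s, ∃ z ∈ box F s, ∃ J : Set I, #J ≤ κ ∧
      ∀ w : I → X, (∀ i ∈ J, w i = z i) → f w = f z := fun F s => by
    obtain ⟨_, hy, z, hz, rfl⟩ := hd.inter_open_nonempty _ (hfo _ (hbox F s))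
      ((hboxne F s).image f) |>.imp fun y hy => And.intro hy.2 hy.1
    exact ⟨z, hz, hfo.exists_determining_coords hf hκ z hy⟩
  choose z hz K hK hKz using hpt
  obtain ⟨J, hJ, hJK⟩ := exists_closed_under_finset_operation hκ (fun F => ⋃ s, K F s)
    fun F => mk_iUnion_le_of_le hκ (mk_pi_finset_le hκ hc F) _ fun s => hK F s
  have hmem : ∀ V : Set (I → X), IsOpen V → p ∈ V → ∃ F : Finset I, (F : Set I) ⊆ J ∧
      ∃ s : F → ℬ, ∀ a ∈ box F s, J.piecewise a p ∈ V := fun V hV hpV => by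
    obtain ⟨F, u, hu, hsub⟩ := isOpen_pi_iff.1 hV p hpV
    obtain ⟨s, hs⟩ := hexbox (F.filter (· ∈ J)) u fun i hi => hu i (Finset.mem_filter.1 hi).1
    refine ⟨F.filter (· ∈ J), fun i hi => (Finset.mem_filter.1 hi).2, s, fun a ha =>
      hsub fun i hi => ?_⟩
    by_cases hiJ : i ∈ J
    · rw [Set.piecewise_eq_of_mem _ _ _ hiJ]
      exact hs ⟨i, Finset.mem_filter.2 ⟨hi, hiJ⟩⟩ (ha ⟨i, Finset.mem_filter.2 ⟨hi, hiJ⟩⟩)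
    · rw [Set.piecewise_eq_of_notMem _ _ _ hiJ]
      exact (hu i hi).2
  have hm := continuous_piecewise_const_right (X := X) J
  have hpc : ∀ c, f (J.piecewise p c) = f p := fun c => by
    by_contra hne
    obtain ⟨W', W, hW', hW, hcW', hpW, hdisj⟩ := t2_separation hne
    have h1 : Continuous fun a : I → X => f (J.piecewise a c) :=
      hf.comp (hm.comp (by fun_prop : Continuous fun a : I → X => (a, c)))
    obtain ⟨F, hFJ, s, hs⟩ := hmem ((fun a => f (J.piecewise a c)) ⁻¹' W' ∩ f ⁻¹' W)
      ((hW'.preimage h1).inter (hW.preimage hf)) ⟨hcW', hpW⟩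
    obtain ⟨hw', hw⟩ := hs (z F s) (hz F s)
    have hsub : K F s ⊆ J := (subset_iUnion (fun s => K F s) s).trans (hJK F hFJ)
    rw [mem_preimage, hKz F s _ fun i hi => by simp [hsub hi]] at hw hw'
    exact hdisj.le_bot ⟨hw', hw⟩
  refine piCharPt_le_iff.2 ⟨⋃ F : Finset J, range fun s : (F.map (.subtype _) : Finset I) → ℬ =>
    f '' box _ s, mk_iUnion_le_of_le hκ ?_ _ fun F => mk_range_le.trans (mk_pi_finset_le hκ hc _),
    ?_, ?_⟩
  · exact mk_finset_le hκ hJ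
  · rintro _ hB
    obtain ⟨F, s, rfl⟩ := mem_iUnion.1 hB
    exact ⟨hfo _ (hbox _ _), (hboxne _ _).image f⟩
  · intro W hW hpW
    obtain ⟨V, V', hV, -, hpV, hV', hVV⟩ := generalized_tube_lemma
      (isCompact_singleton (x := p)) (isCompact_univ (X := I → X))
      (hW.preimage (hf.comp hm)) (by
        rintro ⟨a, c⟩ ⟨ha, -⟩
        obtain rfl : a = p := ha
        simpa only [mem_preimage, Function.comp, hpc c] using hpW)
    obtain ⟨F, hFJ, s, hs⟩ := hmem V hV (hpV rfl)
    have hmap : (F.subtype (· ∈ J)).map (Function.Embedding.subtype _) = F :=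
      Finset.subtype_map_of_mem fun i hi => hFJ hi
    refine ⟨f '' box F s, mem_iUnion.2 ⟨F.subtype (· ∈ J), by rw [hmap]; exact ⟨s, rfl⟩⟩, ?_⟩
    rintro _ ⟨a, ha, rfl⟩
    have := hVV (mk_mem_prod (hs a ha) (hV' (mem_univ a)))
    have haa : J.piecewise (J.piecewise a p) a = a := by
      ext i
      by_cases hi : i ∈ J <;> simp [hi]
    simpa only [mem_preimage, Function.comp, haa] using this

/-- Lemma 4.1, Ridderbos. -/
theorem stmt12 {X : Type u} [TopologicalSpace X] [CompactSpace X] [T2Space X]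
    (hph : PowerHomogeneous X) (κ : Cardinal.{u}) (hκ : ℵ₀ ≤ κ)
    (hd : Dense {x : X | piCharPt x ≤ κ}) :
    piChar X ≤ κ := by
  refine ciSup_le' fun x => ?_
  obtain ⟨I, ⟨i⟩, hI⟩ := hph
  have : Nonempty X := ⟨x⟩
  obtain ⟨d, hdκ⟩ := hd.nonempty
  obtain ⟨h, hh⟩ := hI (fun _ => d) fun _ => x
  have := IsOpenMap.piCharPt_le (f := fun z => h z i) ((continuous_apply i).comp h.continuous)
    ((isOpenMap_eval i).comp h.isOpenMap) hκ hd d hdκ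
  simpa only [hh] using this
end

section
/- Let X be a power homogeneous compactum and κ an infinite cardinal. If every non-empty closed subset F ⊆ X contains a point x with πχ(x,F) ≤ κ, then πχ(X) ≤ κ. -/
open Cardinal Set TopologicalSpace

universe u

theorem mk_finset_le_of_le {α : Type u} {κ : Cardinal.{u}} (hκ : ℵ₀ ≤ κ) (hα : #α ≤ κ) :
    #(Finset α) ≤ κ := by
  cases finite_or_infinite α
  · exact (Cardinal.lt_aleph0_of_finite _).le.trans hκ
  · exact (mk_finset_of_infinite α).le.trans hα

theorem mk_iUnion_le_of_le_s13 {α ι : Type u} {κ : Cardinal.{u}} (hκ : ℵ₀ ≤ κ) (f : ι → Set α)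
    (hι : #ι ≤ κ) (hf : ∀ i, #(f i) ≤ κ) : #(⋃ i, f i) ≤ κ :=
  (mk_iUnion_le f).trans (mul_le_of_le hκ hι (ciSup_le' hf))

theorem exists_map_subtype_eq {α : Type u} {S : Set α} (t : Finset α) (ht : (t : Set α) ⊆ S) :
    ∃ t' : Finset S, t'.map (Function.Embedding.subtype _) = t := by
  classical
  exact ⟨t.subtype (· ∈ S), Finset.subtype_map_of_mem fun x hx => ht hx⟩

theorem exists_localPiBase {X : Type u} [TopologicalSpace X] {x : X} {κ : Cardinal.{u}}
    (hx : piCharPt x ≤ κ) :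
    ∃ ℬ : Set (Set X), #ℬ ≤ κ ∧ (∀ B ∈ ℬ, IsOpen B ∧ B.Nonempty) ∧
      ∀ U : Set X, IsOpen U → x ∈ U → ∃ B ∈ ℬ, B ⊆ U := by
  have hne : {κ : Cardinal.{u} | ∃ ℬ : Set (Set X), #ℬ ≤ κ ∧
      (∀ B ∈ ℬ, IsOpen B ∧ B.Nonempty) ∧
      ∀ U : Set X, IsOpen U → x ∈ U → ∃ B ∈ ℬ, B ⊆ U}.Nonempty :=
    ⟨_, {B | IsOpen B ∧ B.Nonempty}, le_rfl, fun B hB => hB,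
      fun U hU hxU => ⟨U, ⟨hU, ⟨x, hxU⟩⟩, subset_rfl⟩⟩
  obtain ⟨ℬ, h1, h2⟩ := csInf_mem hne
  exact ⟨ℬ, h1.trans hx, h2⟩

/-- If every non-empty closed subset of a compact space has a point of relative π-character at
most `κ`, then independent families of pairs of disjoint closed sets have size at most `κ`. -/
theorem card_le_of_independent {X ι : Type u} [TopologicalSpace X] [CompactSpace X]
    {κ : Cardinal.{u}} (hκ : ℵ₀ ≤ κ)
    (h : ∀ F : Set X, IsClosed F → F.Nonempty → ∃ x : ↥F, piCharPt x ≤ κ)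
    (K : ι → Bool → Set X) (hK : ∀ i b, IsClosed (K i b))
    (hdisj : ∀ i, Disjoint (K i true) (K i false))
    (hind : ∀ (ε : ι → Bool) (t : Finset ι), (⋂ i ∈ t, K i (ε i)).Nonempty) :
    #ι ≤ κ := by
  classical
  have hdisj' : ∀ i b, Disjoint (K i b) (K i (!b)) := by
    rintro i (_ | _)
    · exact (hdisj i).symm
    · exact hdisj i
  let 𝒮 : Set (Set X) := {F | IsClosed F ∧ F ⊆ ⋂ i, (K i true ∪ K i false) ∧
    ∀ ε : ι → Bool, (F ∩ ⋂ i, K i (ε i)).Nonempty}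
  have hbase : (⋂ i, (K i true ∪ K i false)) ∈ 𝒮 := by
    refine ⟨isClosed_iInter fun i => (hK i _).union (hK i _), subset_rfl, fun ε => ?_⟩
    have := isCompact_univ.inter_iInter_nonempty (fun i => K i (ε i)) (fun i => hK i _)
      (fun t => by simpa using hind ε t)
    obtain ⟨z, -, hz⟩ := this
    refine ⟨z, mem_iInter.2 fun i => ?_, hz⟩
    have := mem_iInter.1 hz i
    cases hε : ε i <;> simp_all
  obtain ⟨F, -, hF⟩ := zorn_superset_nonempty 𝒮 (by
    intro c hc hchain hne
    refine ⟨⋂₀ c, ⟨isClosed_sInter fun s hs => (hc hs).1, ?_, fun ε => ?_⟩,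
      fun s hs => sInter_subset_of_mem hs⟩
    · obtain ⟨s, hs⟩ := hne
      exact (sInter_subset_of_mem hs).trans (hc hs).2.1
    · have : Nonempty c := hne.to_subtype
      have hcl : ∀ s : c, IsClosed ((s : Set X) ∩ ⋂ i, K i (ε i)) := fun s =>
        (hc s.2).1.inter (isClosed_iInter fun i => hK i _)
      have := IsCompact.nonempty_iInter_of_directed_nonempty_isCompact_isClosed
        (fun s : c => (s : Set X) ∩ ⋂ i, K i (ε i)) (by
          intro s t
          rcases hchain.total s.2 t.2 with hst | hst
          · exact ⟨s, subset_rfl, inter_subset_inter_left _ hst⟩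
          · exact ⟨t, inter_subset_inter_left _ hst, subset_rfl⟩)
        (fun s => (hc s.2).2.2 ε) (fun s => (hcl s).isCompact) hcl
      obtain ⟨z, hz⟩ := this
      rw [mem_iInter] at hz
      exact ⟨z, mem_sInter.2 fun s hs => (hz ⟨s, hs⟩).1, (hz (Classical.arbitrary c)).2⟩)
    _ hbase
  obtain ⟨hFc, hFsub, hFind⟩ := hF.prop
  obtain ⟨x, hx⟩ := h F hFc ((hFind fun _ => true).mono inter_subset_left)
  obtain ⟨ℬ, hℬ, hℬo, hℬx⟩ := exists_localPiBase hx
  have key : ∀ B : ℬ, ∃ (ε : ι → Bool) (t : Finset ι),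
      ∀ z : F, (∀ i ∈ t, (z : X) ∈ K i (ε i)) → z ∈ (B : Set F) := by
    rintro ⟨B, hB⟩
    obtain ⟨hBo, b, hb⟩ := hℬo B hB
    obtain ⟨O, hO, rfl⟩ := isOpen_induced_iff.1 hBo
    have hcl : IsClosed (F \ O) := hFc.sdiff hO
    have hnot : F \ O ∉ 𝒮 := fun hmem => (hF.le_of_le hmem sdiff_subset b.2).2 hb
    have : ∃ ε : ι → Bool, ¬ ((F \ O) ∩ ⋂ i, K i (ε i)).Nonempty := by
      by_contra! hcon
      exact hnot ⟨hcl, sdiff_subset.trans hFsub, hcon⟩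
    obtain ⟨ε, hε⟩ := this
    have : ∃ t : Finset ι, ¬ ((F \ O) ∩ ⋂ i ∈ t, K i (ε i)).Nonempty := by
      by_contra! hcon
      exact hε (hcl.isCompact.inter_iInter_nonempty _ (fun i => hK i _) hcon)
    obtain ⟨t, ht⟩ := this
    refine ⟨ε, t, fun z hz => ?_⟩
    by_contra hzO
    exact ht ⟨z, ⟨z.2, hzO⟩, mem_iInter₂.2 hz⟩
  choose ε t ht using key
  by_contra! hlt
  have hsmall : #(⋃ B : ℬ, (t B : Set ι) : Set ι) ≤ κ := by
    exact mk_iUnion_le_of_le_s13 hκ _ hℬ fun B => (Cardinal.lt_aleph0_iff_finite.2 (t B).finite_toSet).le.trans hκ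
  obtain ⟨j, hj⟩ : ∃ j, j ∉ ⋃ B : ℬ, (t B : Set ι) := by
    by_contra! hcon
    rw [eq_univ_of_forall hcon, mk_univ] at hsmall
    exact hlt.not_ge hsmall
  obtain ⟨b, hb⟩ : ∃ b, (x : X) ∈ K j b := by
    rcases mem_iInter.1 (hFsub x.2) j with hm | hm
    exacts [⟨_, hm⟩, ⟨_, hm⟩]
  obtain ⟨B, hB, hBs⟩ := hℬx (Subtype.val ⁻¹' (K j (!b))ᶜ)
    ((hK j _).isOpen_compl.preimage continuous_subtype_val)
    (disjoint_left.1 (hdisj' j b) hb)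
  obtain ⟨z, hzF, hz⟩ := hFind (Function.update (ε ⟨B, hB⟩) j (!b))
  rw [mem_iInter] at hz
  refine hBs (ht ⟨B, hB⟩ ⟨z, hzF⟩ fun i hi => ?_) ?_
  · have hij : i ≠ j := by
      rintro rfl
      exact hj (mem_iUnion.2 ⟨_, hi⟩)
    simpa [hij] using hz i
  · simpa using hz j

/-- A set of size at most `κ` closed under a set-valued operation on finite subsets. -/
theorem exists_closed_set {I : Type u} {κ : Cardinal.{u}} (hκ : ℵ₀ ≤ κ)
    (A : Finset I → Set I) (hA : ∀ R, #(A R) ≤ κ) :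
    ∃ D : Set I, #D ≤ κ ∧ ∀ R : Finset I, (R : Set I) ⊆ D → A R ⊆ D := by
  let next : Set I → Set I := fun D => D ∪ ⋃ R : Finset D, A (R.map (Function.Embedding.subtype _))
  let D : ℕ → Set I := fun n => next^[n] ∅
  have hD : ∀ n, D (n + 1) = next (D n) := fun n => Function.iterate_succ_apply' _ _ _
  have hmono : Monotone D := monotone_nat_of_le_succ fun n => by
    rw [hD]
    exact subset_union_left
  have hcard : ∀ n, #(D n) ≤ κ := by
    intro n
    induction n with
    | zero => simp [D]
    | succ n ih =>
      rw [hD]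
      exact (mk_union_le _ _).trans (add_le_of_le hκ ih
        (mk_iUnion_le_of_le_s13 hκ _ (mk_finset_le_of_le hκ ih) fun R => hA _))
  refine ⟨⋃ n : ULift.{u} ℕ, D n.down, mk_iUnion_le_of_le_s13 hκ _ (by simpa using hκ)
    fun n => hcard _, fun R hR => ?_⟩
  obtain ⟨n, hn⟩ := Directed.exists_mem_subset_of_finset_subset_biUnion
    (f := fun n : ULift.{u} ℕ => D n.down)
    (fun m n => ⟨⟨max m.down n.down⟩, hmono (le_max_left _ _), hmono (le_max_right _ _)⟩) hR
  obtain ⟨R', rfl⟩ := exists_map_subtype_eq R hn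
  refine Subset.trans ?_ (subset_iUnion _ ⟨n.down + 1⟩)
  change _ ⊆ D (n.down + 1)
  rw [hD]
  exact subset_union_of_subset_right (subset_iUnion
    (fun R : Finset (D n.down) => A (R.map (Function.Embedding.subtype _))) R') _

/-- Basic neighbourhoods of a constant point of a power. -/
theorem exists_finset_nhds_const {X I : Type u} [TopologicalSpace X] {x : X} {N : Set (I → X)}
    (hN : IsOpen N) (hx : (fun _ => x) ∈ N) :
    ∃ (E : Finset I) (o : Set X), IsOpen o ∧ x ∈ o ∧ ∀ z : I → X, (∀ i ∈ E, z i ∈ o) → z ∈ N := by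
  obtain ⟨E, u, hu, hsub⟩ := isOpen_pi_iff.1 hN _ hx
  exact ⟨E, ⋂ i ∈ E, u i, isOpen_biInter_finset fun i hi => (hu i hi).1,
    mem_iInter₂.2 fun i hi => (hu i hi).2, fun z hz => hsub fun i hi => mem_iInter₂.1 (hz i hi) i hi⟩

/-- A point without small local π-bases can be separated from a member of every small family of
non-empty open sets simultaneously. -/
theorem exists_separating_pair {X : Type u} [TopologicalSpace X] [RegularSpace X] {y : X}
    {κ : Cardinal.{u}} (hy : ¬ piCharPt y ≤ κ) (𝒱 : Set (Set X)) (h𝒱 : #𝒱 ≤ κ)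
    (h𝒱o : ∀ V ∈ 𝒱, IsOpen V ∧ V.Nonempty) :
    ∃ k : Bool → Set X, (∀ b, IsOpen (k b)) ∧ Disjoint (closure (k true)) (closure (k false)) ∧
      y ∈ k true ∧ ∀ V ∈ 𝒱, ∃ z ∈ V, z ∈ k false := by
  have : ∃ W : Set X, IsOpen W ∧ y ∈ W ∧ ∀ V ∈ 𝒱, ¬ V ⊆ W := by
    by_contra! hcon
    exact hy (csInf_le' ⟨𝒱, h𝒱, h𝒱o, hcon⟩)
  obtain ⟨W, hW, hyW, hV⟩ := this
  have shrink : ∀ U : Set X, IsOpen U → y ∈ U → ∃ O, IsOpen O ∧ y ∈ O ∧ closure O ⊆ U := by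
    intro U hU hyU
    obtain ⟨C, hC, hCc, hCU⟩ := exists_mem_nhds_isClosed_subset (hU.mem_nhds hyU)
    exact ⟨interior C, isOpen_interior, mem_interior_iff_mem_nhds.2 hC,
      (closure_minimal interior_subset hCc).trans hCU⟩
  obtain ⟨O, hO, hyO, hOW⟩ := shrink W hW hyW
  obtain ⟨P, hP, hyP, hPO⟩ := shrink O hO hyO
  refine ⟨fun b => if b then P else (closure O)ᶜ, ?_, ?_, by simpa using hyP, fun V hVm => ?_⟩
  · rintro (_ | _)
    · simp
    · simpa using hP
  · have hQ : closure (closure O)ᶜ ⊆ Oᶜ :=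
      closure_minimal (compl_subset_compl.2 subset_closure) hO.isClosed_compl
    simpa using disjoint_of_subset hPO hQ disjoint_compl_right
  · obtain ⟨z, hz, hzW⟩ := not_subset.1 (hV V hVm)
    exact ⟨z, hz, by simpa using fun hzO => hzW (hOW hzO)⟩

/-- A reflection (pressing-down) argument: a single finite set of coordinates `R` and a single
member `B` of a local π-base work for cofinally many small families of open sets. -/
theorem exists_uniform_root {X I : Type u} [TopologicalSpace X] [RegularSpace X] {x y : X}
    {κ : Cardinal.{u}} (hκ : ℵ₀ ≤ κ) {ℬ : Set (Set X)} (hℬ : #ℬ ≤ κ)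
    (hℬx : ∀ U : Set X, IsOpen U → x ∈ U → ∃ B ∈ ℬ, B ⊆ U) (hy : ¬ piCharPt y ≤ κ)
    {f : (I → X) → X} (hfc : Continuous f) (hfo : IsOpenMap f) (hfx : f (fun _ => x) = y) :
    ∃ R : Finset I, ∃ B ∈ ℬ, ∀ (A : Set I) (𝒱 : Set (Set (I → X))), #A ≤ κ → #𝒱 ≤ κ →
      (∀ V ∈ 𝒱, IsOpen V ∧ V.Nonempty) →
      ∃ k : Bool → Set X, (∀ b, IsOpen (k b)) ∧
        Disjoint (closure (k true)) (closure (k false)) ∧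
        (∃ (E : Finset I) (o : Set X), x ∈ o ∧ (∀ z : I → X, (∀ i ∈ E, z i ∈ o) → f z ∈ k true) ∧
          (∀ i ∈ E, i ∈ A → i ∈ R) ∧ B ⊆ o) ∧
        ∀ V ∈ 𝒱, ∃ z ∈ V, f z ∈ k false := by
  classical
  by_contra! hcon
  choose! A 𝒱 hA h𝒱 h𝒱o hbad using hcon
  obtain ⟨D, hD, hDA⟩ := exists_closed_set hκ (fun R => ⋃ B : ℬ, A R B)
    (fun R => mk_iUnion_le_of_le_s13 hκ _ hℬ fun B => hA R B B.2)
  let 𝒲 : Set (Set (I → X)) := ⋃ R : Finset D, ⋃ B : ℬ, 𝒱 (R.map (Function.Embedding.subtype _)) B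
  have h𝒲 : #𝒲 ≤ κ := mk_iUnion_le_of_le_s13 hκ _ (mk_finset_le_of_le hκ hD) fun R =>
    mk_iUnion_le_of_le_s13 hκ _ hℬ fun B => h𝒱 _ B B.2
  have h𝒲o : ∀ V ∈ 𝒲, IsOpen V ∧ V.Nonempty := by
    intro V hV
    obtain ⟨R, hV⟩ := mem_iUnion.1 hV
    obtain ⟨B, hV⟩ := mem_iUnion.1 hV
    exact h𝒱o _ B B.2 V hV
  obtain ⟨k, hko, hkd, hyk, hk⟩ := exists_separating_pair hy ((f '' ·) '' 𝒲)
    (mk_image_le.trans h𝒲) (by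
      rintro _ ⟨V, hV, rfl⟩
      exact ⟨hfo _ (h𝒲o V hV).1, (h𝒲o V hV).2.image f⟩)
  obtain ⟨E, o, ho, hxo, hE⟩ := exists_finset_nhds_const ((hko true).preimage hfc)
    (x := x) (by simpa [hfx] using hyk)
  obtain ⟨B, hB, hBo⟩ := hℬx o ho hxo
  obtain ⟨R, hR⟩ := exists_map_subtype_eq (S := D) (E.filter (· ∈ D)) (by intro i; simp)
  have hAD : A (E.filter (· ∈ D)) B ⊆ D :=
    (subset_iUnion (fun B : ℬ => A (E.filter (· ∈ D)) B) ⟨B, hB⟩).trans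
      (hDA _ (by intro i; simp))
  obtain ⟨V, hV, hVk⟩ := hbad (E.filter (· ∈ D)) B hB k hko hkd
    ⟨E, o, hxo, hE, fun i hi hiA => Finset.mem_filter.2 ⟨hi, hAD hiA⟩, hBo⟩
  obtain ⟨_, ⟨z, hz, rfl⟩, hzk⟩ := hk (f '' V) ⟨V, mem_iUnion₂.2 ⟨R, ⟨B, hB⟩, by rwa [hR]⟩, rfl⟩
  exact hVk z hz hzk

/-- An open map on a power of `X` sending a constant point of small π-character to a point of large
π-character yields a large independent family of pairs of open sets with disjoint closures. -/
theorem exists_large_independent {X I : Type u} [TopologicalSpace X] [RegularSpace X] {x y : X}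
    {κ : Cardinal.{u}} (hκ : ℵ₀ ≤ κ) (hx : piCharPt x ≤ κ) (hy : ¬ piCharPt y ≤ κ)
    {f : (I → X) → X} (hfc : Continuous f) (hfo : IsOpenMap f) (hfx : f (fun _ => x) = y) :
    ∃ S : Set (Bool → Set X), κ < #S ∧
      (∀ k ∈ S, Disjoint (closure (k true)) (closure (k false))) ∧
      ∀ (ε : (Bool → Set X) → Bool) (t : Finset (Bool → Set X)), (t : Set (Bool → Set X)) ⊆ S →
        ∃ z, ∀ k ∈ t, z ∈ k (ε k) := by
  classical
  obtain ⟨ℬ, hℬ, hℬo, hℬx⟩ := exists_localPiBase hx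
  obtain ⟨R, B, hB, hRB⟩ := exists_uniform_root hκ hℬ hℬx hy hfc hfo hfx
  let C : Set (I → X) := {z | ∀ i ∈ R, z i ∈ B}
  have hC : IsOpen C := by
    have : C = (R : Set I).pi fun _ => B := by ext; simp [C, Set.mem_pi]
    rw [this]
    exact isOpen_set_pi R.finite_toSet fun _ _ => (hℬo B hB).1
  obtain ⟨c, hc⟩ := (hℬo B hB).2
  let 𝒮 : Set (Set (Bool → Set X)) := {S |
    (∀ k ∈ S, (∀ b, IsOpen (k b)) ∧ Disjoint (closure (k true)) (closure (k false))) ∧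
      ∀ (ε : (Bool → Set X) → Bool) (t : Finset (Bool → Set X)), (t : Set (Bool → Set X)) ⊆ S →
        ∃ z ∈ C, ∀ k ∈ t, f z ∈ k (ε k)}
  obtain ⟨S, hS⟩ : ∃ S, Maximal (· ∈ 𝒮) S := by
    refine zorn_subset 𝒮 fun c' hc' hchain => ?_
    rcases c'.eq_empty_or_nonempty with rfl | hne
    · refine ⟨∅, ⟨by simp, fun ε t ht => ⟨fun _ => c, fun _ _ => hc, fun k hk => ?_⟩⟩, by simp⟩
      exact (ht hk).elim
    · refine ⟨⋃₀ c', ⟨?_, fun ε t ht => ?_⟩, fun s hs => subset_sUnion_of_mem hs⟩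
      · rintro k ⟨s, hs, hk⟩
        exact (hc' hs).1 k hk
      · rw [sUnion_eq_biUnion] at ht
        obtain ⟨s, hs, hts⟩ := DirectedOn.exists_mem_subset_of_finset_subset_biUnion
          (f := fun s => s) hne hchain.directedOn ht
        exact (hc' hs).2 ε t hts
  obtain ⟨hSo, hSind⟩ := hS.prop
  refine ⟨S, ?_, fun k hk => (hSo k hk).2, fun ε t ht => ?_⟩
  swap
  · obtain ⟨z, -, hz⟩ := hSind ε t ht
    exact ⟨f z, hz⟩
  by_contra! hSκ
  have hbox : ∀ t a : Finset S, ∃ (V : Set (I → X)) (A : Finset I), IsOpen V ∧ V.Nonempty ∧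
      V ⊆ C ∧ (∀ z ∈ V, ∀ k ∈ t, f z ∈ k.1 (decide (k ∈ a))) ∧
      ∀ z ∈ V, ∀ w : I → X, (∀ i ∈ A, w i = z i) → w ∈ V := by
    intro t a
    obtain ⟨z, hzC, hz⟩ := hSind (fun k => decide (k ∈ a.map (Function.Embedding.subtype _)))
      (t.map (Function.Embedding.subtype _)) (by intro k; simp +contextual)
    have hz' : ∀ k ∈ t, f z ∈ k.1 (decide (k ∈ a)) := by
      intro k hk
      have := hz k (by simp [hk])
      simpa using this
    have hopen : IsOpen (C ∩ ⋂ k ∈ t, f ⁻¹' (k.1 (decide (k ∈ a)))) :=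
      hC.inter (isOpen_biInter_finset fun k _ => ((hSo k k.2).1 _).preimage hfc)
    obtain ⟨A, u, hu, hsub⟩ := isOpen_pi_iff.1 hopen z ⟨hzC, mem_iInter₂.2 hz'⟩
    refine ⟨(A : Set I).pi u, A, isOpen_set_pi A.finite_toSet fun i hi => (hu i hi).1,
      ⟨z, fun i hi => (hu i hi).2⟩, fun w hw => (hsub hw).1,
      fun w hw k hk => mem_iInter₂.1 (hsub hw).2 k hk, fun w hw v hv i hi => ?_⟩
    rw [hv i hi]
    exact hw i hi
  choose V A hVo hVne hVC hVf hVA using hbox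
  have hfin : #(Finset S × Finset S) ≤ κ := by
    rw [← mul_def]
    exact mul_le_of_le hκ (mk_finset_le_of_le hκ hSκ) (mk_finset_le_of_le hκ hSκ)
  obtain ⟨k, hko, hkd, ⟨E, o, hxo, hE, hER, hBo⟩, hkV⟩ := hRB
    (⋃ q : Finset S × Finset S, (A q.1 q.2 : Set I)) (range fun q : Finset S × Finset S => V q.1 q.2)
    (mk_iUnion_le_of_le_s13 hκ _ hfin fun q =>
      (Cardinal.lt_aleph0_iff_finite.2 (A q.1 q.2).finite_toSet).le.trans hκ)
    (mk_range_le.trans hfin) (by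
      rintro _ ⟨q, rfl⟩
      exact ⟨hVo _ _, hVne _ _⟩)
  have hext : ∀ (t a : Finset S) (b : Bool), ∃ z ∈ V t a, f z ∈ k b := by
    rintro t a (_ | _)
    · exact hkV _ ⟨(t, a), rfl⟩
    · obtain ⟨v, hv⟩ := hVne t a
      let w : I → X := fun i => if i ∈ A t a then v i else x
      have hw : ∀ i ∈ A t a, w i = v i := fun i hi => if_pos hi
      refine ⟨w, hVA t a v hv w hw, hE w fun i hi => ?_⟩
      by_cases hiA : i ∈ A t a
      · rw [hw i hiA]
        exact hBo (hVC t a hv i (hER i hi (mem_iUnion.2 ⟨(t, a), hiA⟩)))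
      · simpa [w, hiA] using hxo
  have hins : insert k S ∈ 𝒮 := by
    refine ⟨?_, fun ε t ht => ?_⟩
    · rintro k' (rfl | hk')
      exacts [⟨hko, hkd⟩, hSo k' hk']
    · obtain ⟨t', ht'⟩ := exists_map_subtype_eq (S := S) (t.erase k) (by
        intro k' hk'
        obtain ⟨hne, hk'⟩ := Finset.mem_erase.1 hk'
        exact (ht hk').resolve_left hne)
      obtain ⟨z, hz, hzk⟩ := hext t' (t'.filter fun k' => ε k' = true) (ε k)
      refine ⟨z, hVC _ _ hz, fun k' hk' => ?_⟩
      by_cases hkk : k' = k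
      · rwa [hkk]
      · have : k' ∈ t'.map (Function.Embedding.subtype _) := by
          rw [ht']
          exact Finset.mem_erase.2 ⟨hkk, hk'⟩
        obtain ⟨k'', hk'', rfl⟩ := Finset.mem_map.1 this
        simpa [hk''] using hVf _ _ z hz k'' hk''
  have hkS : k ∈ S := hS.le_of_ge hins (subset_insert k S) (mem_insert k S)
  obtain ⟨z, hz, hzk⟩ := hext {⟨k, hkS⟩} {⟨k, hkS⟩} false
  have hzt : f z ∈ k true := by simpa using hVf _ _ z hz ⟨k, hkS⟩ (by simp)
  exact disjoint_left.1 hkd (subset_closure hzt) (subset_closure hzk)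

/-- Lemma 4.2. -/
theorem stmt13 {X : Type u} [TopologicalSpace X] [CompactSpace X] [T2Space X]
    (hph : PowerHomogeneous X) (κ : Cardinal.{u}) (hκ : ℵ₀ ≤ κ)
    (h : ∀ F : Set X, IsClosed F → F.Nonempty → ∃ x : ↥F, piCharPt x ≤ κ) :
    piChar X ≤ κ := by
  refine ciSup_le' fun y => ?_
  by_contra hy
  obtain ⟨I, ⟨i₀⟩, hhom⟩ := hph
  obtain ⟨x', hx'⟩ := h univ isClosed_univ ⟨y, mem_univ y⟩
  obtain ⟨ℬ, hℬ, hℬo, hℬx⟩ := exists_localPiBase hx'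
  have hx : piCharPt (x' : X) ≤ κ := by
    refine csInf_le' ⟨(Subtype.val '' ·) '' ℬ, mk_image_le.trans hℬ, ?_, fun U hU hxU => ?_⟩
    · rintro _ ⟨B, hB, rfl⟩
      exact ⟨isOpen_univ.isOpenMap_subtype_val _ (hℬo B hB).1, (hℬo B hB).2.image _⟩
    · obtain ⟨B, hB, hBU⟩ := hℬx _ (hU.preimage continuous_subtype_val) hxU
      exact ⟨_, ⟨B, hB, rfl⟩, image_subset_iff.2 hBU⟩
  obtain ⟨g, hg⟩ := hhom (fun _ => (x' : X)) (fun _ => y)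
  obtain ⟨S, hSκ, hSd, hSind⟩ := exists_large_independent hκ hx hy
    (f := fun z => g z i₀) ((continuous_apply i₀).comp g.continuous)
    ((isOpenMap_eval i₀).comp g.isOpenMap) (by simp [hg])
  refine hSκ.not_ge (card_le_of_independent hκ h (fun (k : S) b => closure (k.1 b))
    (fun _ _ => isClosed_closure) (fun k => hSd k k.2) fun ε t => ?_)
  classical
  obtain ⟨z, hz⟩ := hSind (fun k => if hk : k ∈ S then ε ⟨k, hk⟩ else true)
    (t.map (Function.Embedding.subtype _)) (by intro k; simp +contextual)
  refine ⟨z, mem_iInter₂.2 fun k hk => subset_closure ?_⟩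
  simpa using hz k (by simp [hk])
end

section
/- Let X be a power homogeneous space with πχ(X) ≤ ω. If X contains a non-empty subseparable closed G^c_δ-set, then every point of X is contained in a subseparable closed G^c_δ-set. -/
open Cardinal Set TopologicalSpace

universe u

section PowerHomogeneousSpaces

open scoped Classical

/-- In a space of countable π-character every point has a countable local π-base. -/
theorem exists_seq_local_piBase {X : Type u} [TopologicalSpace X] (hpi : piChar X ≤ ℵ₀) (x : X) :
    ∃ b : ℕ → Set X, (∀ n, IsOpen (b n) ∧ (b n).Nonempty) ∧
      ∀ U : Set X, IsOpen U → x ∈ U → ∃ n, b n ⊆ U := by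
  have hx : piCharPt x ≤ ℵ₀ :=
    (le_ciSup Cardinal.bddAbove_of_small x).trans hpi
  have hmem : piCharPt x ∈ {κ : Cardinal.{u} | ∃ ℬ : Set (Set X), #ℬ ≤ κ ∧
      (∀ B ∈ ℬ, IsOpen B ∧ B.Nonempty) ∧ ∀ U : Set X, IsOpen U → x ∈ U → ∃ B ∈ ℬ, B ⊆ U} :=
    csInf_mem ⟨_, {B : Set X | IsOpen B ∧ B.Nonempty}, le_rfl, fun B hB => hB,
      fun U hU hxU => ⟨U, ⟨hU, x, hxU⟩, subset_rfl⟩⟩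
  obtain ⟨ℬ, hcard, hop, hbase⟩ := hmem
  have hcount : ℬ.Countable := Cardinal.le_aleph0_iff_set_countable.1 (hcard.trans hx)
  have hne : ℬ.Nonempty := by
    obtain ⟨B, hB, -⟩ := hbase Set.univ isOpen_univ (mem_univ x)
    exact ⟨B, hB⟩
  obtain ⟨b, hb⟩ := hcount.exists_eq_range hne
  refine ⟨b, fun n => hop _ (hb ▸ mem_range_self n), fun U hU hxU => ?_⟩
  obtain ⟨B, hB, hBU⟩ := hbase U hU hxU
  rw [hb] at hB
  obtain ⟨n, rfl⟩ := hB
  exact ⟨n, hBU⟩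

/-- A point of an open subset of a product lies in an open box of finite support inside it. -/
theorem IsOpen.exists_box {X I : Type u} [TopologicalSpace X] {O : Set (I → X)} (hO : IsOpen O)
    {f : I → X} (hf : f ∈ O) :
    ∃ (F : Finset I) (v : I → Set X), (∀ i, IsOpen (v i)) ∧ (∀ i, f i ∈ v i) ∧
      (∀ i ∉ F, v i = Set.univ) ∧ Set.univ.pi v ⊆ O := by
  obtain ⟨F, w, hw, hsub⟩ := isOpen_pi_iff.1 hO f hf
  refine ⟨F, fun i => if i ∈ F then w i else Set.univ, fun i => ?_, fun i => ?_, fun i hi => ?_,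
    fun y hy => hsub fun i hi => ?_⟩
  · by_cases hi : i ∈ F
    · simpa [hi] using (hw i hi).1
    · simp [hi]
  · by_cases hi : i ∈ F
    · simpa [hi] using (hw i hi).2
    · simp [hi]
  · simp [hi]
  · have := hy i (mem_univ i)
    simpa [Finset.mem_coe.1 hi] using this

theorem isOpen_univ_pi_of_support {X I : Type u} [TopologicalSpace X] {R : Finset I}
    {v : I → Set X} (hv : ∀ i, IsOpen (v i)) (hR : ∀ i ∉ R, v i = Set.univ) :
    IsOpen (Set.univ.pi v) := by
  have : Set.univ.pi v = (R : Set I).pi v := by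
    ext y
    refine ⟨fun h i _ => h i (mem_univ i), fun h i _ => ?_⟩
    by_cases hi : i ∈ R
    · exact h i hi
    · simp [hR i hi]
  rw [this]
  exact isOpen_set_pi R.finite_toSet fun i _ => hv i

/-- Uncountably many finitely supported neighbourhoods of one point contain a common
nonempty open box when all points have countable π-character. -/
theorem exists_common_box {X I ι : Type u} [TopologicalSpace X] (hpi : piChar X ≤ ℵ₀)
    (R : Finset I) (f : I → X) {S : Set ι} (hS : ¬ S.Countable) (O : ι → I → Set X)
    (hO : ∀ s ∈ S, ∀ i ∈ R, IsOpen (O s i) ∧ f i ∈ O s i) :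
    ∃ v : I → Set X, (∀ i, IsOpen (v i)) ∧ (∀ i, (v i).Nonempty) ∧ (∀ i ∉ R, v i = Set.univ) ∧
      ∃ S' ⊆ S, ¬ S'.Countable ∧ ∀ s ∈ S', ∀ i ∈ R, v i ⊆ O s i := by
  choose b hb hbase using fun x : X => exists_seq_local_piBase hpi x
  have hex : ∀ s ∈ S, ∃ φ : R → ℕ, ∀ i : R, b (f i) (φ i) ⊆ O s i := fun s hs => by
    choose φ hφ using fun i : R => hbase (f i) (O s i) (hO s hs i i.2).1 (hO s hs i i.2).2
    exact ⟨φ, hφ⟩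
  have hunion : S = ⋃ φ : R → ℕ, {s ∈ S | ∀ i : R, b (f i) (φ i) ⊆ O s i} := by
    ext s
    simp only [mem_iUnion, mem_ofPred_eq]
    exact ⟨fun hs => (hex s hs).imp fun φ hφ => ⟨hs, hφ⟩, fun ⟨_, hs, _⟩ => hs⟩
  obtain ⟨φ, hφ⟩ : ∃ φ : R → ℕ, ¬ {s ∈ S | ∀ i : R, b (f i) (φ i) ⊆ O s i}.Countable := by
    by_contra! hcon
    exact hS (hunion ▸ countable_iUnion hcon)
  refine ⟨fun i => if h : i ∈ R then b (f i) (φ ⟨i, h⟩) else Set.univ, fun i => ?_, fun i => ?_,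
    fun i hi => ?_, _, sep_subset _ _, hφ, fun s hs i hi => ?_⟩
  · by_cases hi : i ∈ R
    · simpa [hi] using (hb _ _).1
    · simp [hi]
  · by_cases hi : i ∈ R
    · simpa [hi] using (hb _ _).2
    · have : Nonempty X := ⟨f i⟩
      simp [hi]
  · simp [hi]
  · simpa [hi] using hs.2 ⟨i, hi⟩

/-- Uncountably many members of a pairwise disjoint family avoid a given finite set. -/
theorem not_countable_sep_disjoint {I : Type u} {S : Set (Finset I)} (hS : ¬ S.Countable)
    (hdisj : S.PairwiseDisjoint id) (T : Finset I) : ¬ {E ∈ S | Disjoint E T}.Countable := by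
  intro hcount
  have hbad : (⋃ t ∈ T, {E ∈ S | t ∈ E}).Countable := by
    refine T.countable_toSet.biUnion fun t _ => Set.Subsingleton.countable ?_
    intro E hE E' hE'
    by_contra hne
    exact Finset.disjoint_left.1 (hdisj hE.1 hE'.1 hne) hE.2 hE'.2
  refine hS ((hcount.union hbad).mono fun E hE => ?_)
  by_cases h : Disjoint E T
  · exact Or.inl ⟨hE, h⟩
  · obtain ⟨t, htE, htT⟩ := Finset.not_disjoint_iff.1 h
    exact Or.inr (mem_biUnion htT ⟨hE, htE⟩)

variable {X I : Type u} [TopologicalSpace X]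

/-- The preimage under `Φ` of the point that agrees with `z` except at `o`, where it agrees
with `Φ d`. -/
noncomputable def pullbackPoint (Φ : (I → X) ≃ₜ (I → X)) (z : I → X) (o : I) (d : I → X) :
    I → X :=
  Φ.symm (Function.update z o (Φ d o))

/-- The point that agrees with `d` on `R₀` and with `pullbackPoint Φ z o d` elsewhere. -/
noncomputable def testPoint (Φ : (I → X) ≃ₜ (I → X)) (z : I → X) (o : I) (d : I → X)
    (R₀ : Finset I) : I → X :=
  fun i => if i ∈ R₀ then d i else pullbackPoint Φ z o d i

/-- A finite set `E` of coordinates which, together with the boxes listed here, witnesses that the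
`o`-th coordinate of `Φ (testPoint Φ z o d R₀)` misses a certain open set `W`. -/
structure Obstruction (Φ : (I → X) ≃ₜ (I → X)) (z : I → X) (o : I) (d : I → X)
    (R₀ R E : Finset I) where
  /-- an open set missed by the test point -/
  W : Set X
  /-- a box mapped into `W` at the coordinate `o` -/
  n : I → Set X
  /-- a box in the image whose preimage lies in the box `n` -/
  m : I → Set X
  /-- a box mapped into the box `m` -/
  n' : I → Set X
  /-- a point of the box `n'` -/
  k : I → X
  /-- a box around `Φ d` controlling the coordinates in `R₀` -/
  l : I → Set X
  /-- a box around the pullback point mapped into `m` off the coordinate `o` -/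
  p : I → Set X
  /-- a box in the image whose preimage lies in the box `p` -/
  q : I → Set X
  testPoint_notMem : Φ (testPoint Φ z o d R₀) o ∉ W
  map_n : ∀ y ∈ Set.univ.pi n, Φ y o ∈ W
  n_support : ∀ i, i ∉ R₀ → i ∉ E → n i = Set.univ
  mem_n : ∀ i ∈ R₀, d i ∈ n i
  m_open : ∀ i, IsOpen (m i)
  symm_m : ∀ w ∈ Set.univ.pi m, Φ.symm w ∈ Set.univ.pi n
  map_n' : ∀ y ∈ Set.univ.pi n', Φ y ∈ Set.univ.pi m
  n'_support : ∀ i, i ∉ R₀ → i ∉ E → n' i = Set.univ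
  mem_n' : ∀ i, k i ∈ n' i
  l_open : ∀ i, IsOpen (l i)
  mem_l : ∀ i, Φ d i ∈ l i
  l_support : ∀ i, i ∉ R → i ∉ E → l i = Set.univ
  symm_l : ∀ w ∈ Set.univ.pi l, ∀ i ∈ R₀, Φ.symm w i ∈ n' i
  mem_p : ∀ i, pullbackPoint Φ z o d i ∈ p i
  map_p : ∀ y ∈ Set.univ.pi p, ∀ i, i ≠ o → Φ y i ∈ m i
  q_open : ∀ i, IsOpen (q i)
  mem_q : ∀ i, Function.update z o (Φ d o) i ∈ q i
  q_support : ∀ i, i ∉ R → i ∉ E → q i = Set.univ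
  symm_q : ∀ w ∈ Set.univ.pi q, Φ.symm w ∈ Set.univ.pi p

/-- A disjoint family of obstructing sets is countable. -/
theorem countable_of_obstruction (hpi : piChar X ≤ ℵ₀) (Φ : (I → X) ≃ₜ (I → X)) (z : I → X)
    {o : I} (d : I → X) {R₀ R : Finset I} (hR₀ : R₀ ⊆ R) (ho : o ∈ R) {S : Set (Finset I)}
    (hdisj : S.PairwiseDisjoint id) (hSR : ∀ E ∈ S, Disjoint E R)
    (hS : ∀ E ∈ S, Nonempty (Obstruction Φ z o d R₀ R E)) : S.Countable := by
  by_contra hunc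
  let ob : ∀ E : S, Obstruction Φ z o d R₀ R E := fun E => (hS E E.2).some
  -- A common box inside the boxes around `Φ d`.
  obtain ⟨δ, δ_open, δ_ne, δ_supp, S₁, hS₁, hunc₁, hδ⟩ :=
    exists_common_box hpi R (Φ d) hunc
      (fun E i => if h : E ∈ S then
        (ob ⟨E, h⟩).l i ∩ (if i = o then (ob ⟨E, h⟩).q i else Set.univ) else Set.univ)
      (by
        intro E hE i _
        simp only [hE, dif_pos]
        by_cases hi : i = o
        · subst hi
          refine ⟨by simpa using ((ob ⟨E, hE⟩).l_open i).inter ((ob ⟨E, hE⟩).q_open i), ?_⟩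
          have := (ob ⟨E, hE⟩).mem_q i
          rw [Function.update_self] at this
          simpa using ⟨(ob ⟨E, hE⟩).mem_l i, this⟩
        · simpa [hi] using ⟨(ob ⟨E, hE⟩).l_open i, (ob ⟨E, hE⟩).mem_l i⟩)
  have hδl : ∀ E (hE : E ∈ S₁), ∀ i ∈ R, δ i ⊆ (ob ⟨E, hS₁ hE⟩).l i := fun E hE i hi => by
    have := hδ E hE i hi
    simp only [hS₁ hE, dif_pos] at this
    exact this.trans inter_subset_left
  have hδq : ∀ E (hE : E ∈ S₁), δ o ⊆ (ob ⟨E, hS₁ hE⟩).q o := fun E hE => by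
    have := hδ E hE o ho
    simp only [hS₁ hE, dif_pos, if_true] at this
    exact this.trans inter_subset_right
  choose e he using δ_ne
  have hopen : IsOpen (Φ ⁻¹' Set.univ.pi δ) :=
    (isOpen_univ_pi_of_support δ_open δ_supp).preimage Φ.continuous
  obtain ⟨T, c, c_open, c_mem, c_supp, hc⟩ :=
    hopen.exists_box (f := Φ.symm e) (by simpa using he)
  have hopen' : IsOpen (Φ.symm ⁻¹' Set.univ.pi c) :=
    (isOpen_univ_pi_of_support c_open c_supp).preimage Φ.symm.continuous
  obtain ⟨T', c', c'_open, c'_mem, c'_supp, hc'⟩ :=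
    hopen'.exists_box (f := e) (fun i _ => c_mem i)
  -- Simultaneously correct the coordinates in all remaining sets.
  set S₂ : Set (Finset I) := {E ∈ S₁ | Disjoint E (T ∪ T')} with hS₂
  have hS₂₁ : S₂ ⊆ S₁ := sep_subset _ _
  have hS₂S : S₂ ⊆ S := hS₂₁.trans hS₁
  have hunc₂ : ¬ S₂.Countable := not_countable_sep_disjoint hunc₁ (hdisj.subset hS₁) _
  have hT : ∀ E ∈ S₂, ∀ i ∈ E, i ∉ T ∧ i ∉ T' := fun E hE i hi => by
    have := Finset.disjoint_left.1 hE.2 hi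
    simpa using this
  have hER : ∀ E ∈ S₂, ∀ i ∈ E, i ∉ R := fun E hE i hi =>
    Finset.disjoint_left.1 (hSR E (hS₂S hE)) hi
  let w : I → X := fun i => if ∃ E ∈ S₂, i ∈ E then Φ d i else e i
  have hw : w ∈ Set.univ.pi c' := fun i _ => by
    by_cases hi : ∃ E ∈ S₂, i ∈ E
    · obtain ⟨E, hE, hiE⟩ := hi
      rw [c'_supp i (hT E hE i hiE).2]
      exact mem_univ _
    · simpa [w, hi] using c'_mem i
  have hwl : ∀ E (hE : E ∈ S₂), w ∈ Set.univ.pi (ob ⟨E, hS₂S hE⟩).l := fun E hE i _ => by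
    by_cases hi : ∃ E ∈ S₂, i ∈ E
    · simpa only [w, if_pos hi] using (ob ⟨E, hS₂S hE⟩).mem_l i
    · by_cases hiR : i ∈ R
      · simpa only [w, if_neg hi] using hδl E (hS₂₁ hE) i hiR (he i)
      · rw [(ob ⟨E, hS₂S hE⟩).l_support i hiR fun hiE => hi ⟨E, hE, hiE⟩]
        exact mem_univ _
  let g : I → X := fun i =>
    if h : ∃ E, ∃ hE : E ∈ S₂, i ∈ E then (ob ⟨h.choose, hS₂S h.choose_spec.choose⟩).k i
    else Φ.symm w i
  have hg : g ∈ Set.univ.pi c := fun i _ => by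
    by_cases hi : ∃ E, ∃ _ : E ∈ S₂, i ∈ E
    · obtain ⟨E, hE, hiE⟩ := hi
      rw [c_supp i (hT E hE i hiE).1]
      exact mem_univ _
    · simpa only [g, dif_neg hi] using hc' hw i (mem_univ i)
  have hgn : ∀ E (hE : E ∈ S₂), g ∈ Set.univ.pi (ob ⟨E, hS₂S hE⟩).n' := fun E hE i _ => by
    by_cases hiE : i ∈ E
    · have hi : ∃ E, ∃ _ : E ∈ S₂, i ∈ E := ⟨E, hE, hiE⟩
      have heq : hi.choose = E := by
        by_contra hne
        exact Finset.disjoint_left.1 (hdisj (hS₂S hi.choose_spec.choose) (hS₂S hE) hne)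
          hi.choose_spec.choose_spec hiE
      have key : ∀ (E' : Finset I) (h : E' ∈ S), E' = E →
          (ob ⟨E', h⟩).k i ∈ (ob ⟨E, hS₂S hE⟩).n' i := by
        rintro _ h rfl
        exact (ob _).mem_n' i
      simp only [g, dif_pos hi]
      exact key _ _ heq
    · by_cases hi₀ : i ∈ R₀
      · have hi : ¬ ∃ E, ∃ _ : E ∈ S₂, i ∈ E := fun ⟨E', hE', hiE'⟩ =>
          hER E' hE' i hiE' (hR₀ hi₀)
        simpa only [g, dif_neg hi] using (ob ⟨E, hS₂S hE⟩).symm_l w (hwl E hE) i hi₀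
      · rw [(ob ⟨E, hS₂S hE⟩).n'_support i hi₀ hiE]
        exact mem_univ _
  let f : I → X := Function.update z o (Φ g o)
  -- A common box inside the boxes around `f`.
  obtain ⟨β, β_open, β_ne, β_supp, S₃, hS₃, hunc₃, hβ⟩ :=
    exists_common_box hpi R f hunc₂
      (fun E i => if h : E ∈ S then
        (ob ⟨E, h⟩).q i ∩ (if i = o then (ob ⟨E, h⟩).m i else Set.univ) else Set.univ)
      (by
        intro E hE i _
        have hES := hS₂S hE
        simp only [hES, dif_pos]
        by_cases hi : i = o
        · subst hi
          refine ⟨by simpa using ((ob ⟨E, hES⟩).q_open i).inter ((ob ⟨E, hES⟩).m_open i), ?_⟩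
          have h1 : Φ g i ∈ (ob ⟨E, hES⟩).q i := hδq E (hS₂₁ hE) (hc hg i (mem_univ i))
          have h2 : Φ g i ∈ (ob ⟨E, hES⟩).m i :=
            (ob ⟨E, hES⟩).map_n' g (hgn E hE) i (mem_univ i)
          simpa [f] using ⟨h1, h2⟩
        · have h1 := (ob ⟨E, hES⟩).mem_q i
          rw [Function.update_of_ne hi] at h1
          simpa [hi, f] using ⟨(ob ⟨E, hES⟩).q_open i, h1⟩)
  have hβq : ∀ E (hE : E ∈ S₃), ∀ i ∈ R, β i ⊆ (ob ⟨E, hS₂S (hS₃ hE)⟩).q i :=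
    fun E hE i hi => by
      have := hβ E hE i hi
      simp only [hS₂S (hS₃ hE), dif_pos] at this
      exact this.trans inter_subset_left
  have hβm : ∀ E (hE : E ∈ S₃), β o ⊆ (ob ⟨E, hS₂S (hS₃ hE)⟩).m o := fun E hE => by
    have := hβ E hE o ho
    simp only [hS₂S (hS₃ hE), dif_pos, if_true] at this
    exact this.trans inter_subset_right
  choose a ha using β_ne
  have hopenβ : IsOpen (Φ ⁻¹' Set.univ.pi β) :=
    (isOpen_univ_pi_of_support β_open β_supp).preimage Φ.continuous
  obtain ⟨Q, r, r_open, r_mem, r_supp, hr⟩ :=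
    hopenβ.exists_box (f := Φ.symm a) (by simpa using ha)
  have hopenr : IsOpen (Φ.symm ⁻¹' Set.univ.pi r) :=
    (isOpen_univ_pi_of_support r_open r_supp).preimage Φ.symm.continuous
  obtain ⟨Q', r', r'_open, r'_mem, r'_supp, hr'⟩ :=
    hopenr.exists_box (f := a) (fun i _ => r_mem i)
  obtain ⟨E, hE₃, hEQ⟩ : {E ∈ S₃ | Disjoint E (Q ∪ Q')}.Nonempty := by
    rw [nonempty_iff_ne_empty]
    intro h
    exact not_countable_sep_disjoint hunc₃ (hdisj.subset (hS₃.trans hS₂S)) (Q ∪ Q')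
      (h ▸ countable_empty)
  have hES : E ∈ S := hS₂S (hS₃ hE₃)
  have hEQ' : ∀ i ∈ E, i ∉ Q ∧ i ∉ Q' := fun i hi => by
    simpa using Finset.disjoint_left.1 hEQ hi
  let B := ob ⟨E, hES⟩
  let w' : I → X := fun i => if i ∈ E then Function.update z o (Φ d o) i else a i
  have hw'r : w' ∈ Set.univ.pi r' := fun i _ => by
    by_cases hi : i ∈ E
    · rw [r'_supp i (hEQ' i hi).2]
      exact mem_univ _
    · simpa only [w', if_neg hi] using r'_mem i
  have hw'q : w' ∈ Set.univ.pi B.q := fun i _ => by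
    by_cases hi : i ∈ E
    · simpa only [w', if_pos hi] using B.mem_q i
    · by_cases hiR : i ∈ R
      · simpa only [w', if_neg hi] using hβq E hE₃ i hiR (ha i)
      · rw [B.q_support i hiR hi]
        exact mem_univ _
  have hyr : Φ.symm w' ∈ Set.univ.pi r := hr' hw'r
  have hyp : Φ.symm w' ∈ Set.univ.pi B.p := B.symm_q w' hw'q
  have hkn : ∀ i ∈ E, pullbackPoint Φ z o d i ∈ B.n i := fun i hi => by
    let y := Function.update (Φ.symm w') i (pullbackPoint Φ z o d i)
    have hy₁ : y ∈ Set.univ.pi r := fun j _ => by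
      by_cases hj : j = i
      · rw [hj, r_supp i (hEQ' i hi).1]
        exact mem_univ _
      · simpa only [y, Function.update_of_ne hj] using hyr j (mem_univ j)
    have hy₂ : y ∈ Set.univ.pi B.p := fun j _ => by
      by_cases hj : j = i
      · subst hj
        simpa only [y, Function.update_self] using B.mem_p j
      · simpa only [y, Function.update_of_ne hj] using hyp j (mem_univ j)
    have hΦy : Φ y ∈ Set.univ.pi B.m := fun j _ => by
      by_cases hj : j = o
      · subst hj
        exact hβm E hE₃ (hr hy₁ j (mem_univ j))
      · exact B.map_p y hy₂ j hj
    have := B.symm_m _ hΦy i (mem_univ i)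
    simpa [y] using this
  refine B.testPoint_notMem (B.map_n _ fun i _ => ?_)
  by_cases hi₀ : i ∈ R₀
  · simpa only [testPoint, if_pos hi₀] using B.mem_n i hi₀
  · by_cases hi : i ∈ E
    · simpa only [testPoint, if_neg hi₀] using hkn i hi
    · rw [B.n_support i hi₀ hi]
      exact mem_univ _

/-- If all disjoint families of finite sets with property `P` are countable, then some countable
set meets all nonempty finite sets with property `P`. -/
theorem exists_countable_transversal (P : Finset I → Prop)
    (hP : ∀ S : Set (Finset I), (∀ E ∈ S, P E) → S.PairwiseDisjoint id → S.Countable) :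
    ∃ A : Set I, A.Countable ∧ ∀ E, P E → E.Nonempty → ∃ i ∈ E, i ∈ A := by
  obtain ⟨M, hM⟩ := zorn_subset {S : Set (Finset I) | (∀ E ∈ S, P E) ∧ S.PairwiseDisjoint id}
    fun C hC hchain => ⟨⋃₀ C, ⟨fun E ⟨S, hS, hE⟩ => (hC hS).1 E hE,
      (pairwiseDisjoint_sUnion hchain.directedOn).2 fun S hS => (hC hS).2⟩,
      fun S hS => subset_sUnion_of_mem hS⟩
  refine ⟨⋃ E ∈ M, (E : Set I), (hP M hM.prop.1 hM.prop.2).biUnion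
    fun E _ => E.countable_toSet, fun E hE hne => ?_⟩
  by_contra! hcon
  have hdis : ∀ E' ∈ M, Disjoint E E' := fun E' hE' => Finset.disjoint_left.2 fun i hi hi' =>
    hcon i hi (mem_biUnion hE' hi')
  have hins : insert E M ∈ {S : Set (Finset I) | (∀ E ∈ S, P E) ∧ S.PairwiseDisjoint id} := by
    refine ⟨fun E' hE' => ?_, hM.prop.2.insert fun E' hE' _ => hdis E' hE'⟩
    rcases hE' with rfl | hE'
    · exact hE
    · exact hM.prop.1 E' hE'
  have hEM : E ∈ M := hM.le_of_ge hins (subset_insert E M) (mem_insert E M)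
  obtain ⟨i, hi⟩ := hne
  exact hcon i hi (mem_biUnion hEM hi)

/-- Closing off a countable set under a countable-valued operation on finite sets. -/
theorem exists_countable_closed (A : Finset I → Set I) (hA : ∀ R, (A R).Countable) (o : I) :
    ∃ J : Set I, J.Countable ∧ o ∈ J ∧ ∀ R : Finset I, (R : Set I) ⊆ J → A R ⊆ J := by
  let step : Set I → Set I := fun J => J ∪ ⋃ R : Finset J, A (R.map (Function.Embedding.subtype _))
  let J : ℕ → Set I := fun n => step^[n] {o}
  have hsucc : ∀ n, J (n + 1) = step (J n) := fun n => Function.iterate_succ_apply' step n {o}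
  have hmono : Monotone J := monotone_nat_of_le_succ fun n => by
    rw [hsucc]
    exact subset_union_left
  have hcount : ∀ n, (J n).Countable := by
    intro n
    induction n with
    | zero => exact countable_singleton o
    | succ n ih =>
      rw [hsucc]
      have : Countable (J n) := ih
      exact ih.union (countable_iUnion fun R => hA _)
  refine ⟨⋃ n, J n, countable_iUnion hcount, mem_iUnion.2 ⟨0, mem_singleton o⟩, fun R hR => ?_⟩
  obtain ⟨n, hn⟩ : ∃ n, (R : Set I) ⊆ J n :=
    (hmono.directed_le).exists_mem_subset_of_finset_subset_biUnion hR
  refine subset_iUnion_of_subset (n + 1) ?_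
  rw [hsucc]
  have hR' : (R.subtype (· ∈ J n)).map (Function.Embedding.subtype _) = R :=
    Finset.subtype_map_of_mem fun i hi => hn hi
  exact subset_union_of_subset_right
    (subset_iUnion_of_subset (R.subtype (· ∈ J n)) (by rw [hR'])) _

/-- The point with coordinates `a` on `R₀` and `p` elsewhere. -/
noncomputable def extendPoint {c : Set X} {R₀ : Finset I} (p : X) (a : R₀ → c) : I → X :=
  fun i => if h : i ∈ R₀ then (a ⟨i, h⟩ : X) else p

/-- If `W` is a neighbourhood of `x` missed by all test points over `J`, then there is a nonempty
obstructing set disjoint from `J`. -/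
theorem exists_obstruction (Φ : (I → X) ≃ₜ (I → X)) (z : I → X) {o : I} {J : Set I} (ho : o ∈ J)
    {G c : Set X} (hGc : G ⊆ closure c) {W : Set X} (hW : IsOpen W) {x : X} (hxW : x ∈ W)
    (hx : ∀ i ∈ J, Φ.symm (Function.update z o x) i ∈ G) (p : X)
    (hmiss : ∀ R₀ : Finset I, (R₀ : Set I) ⊆ J → ∀ a : R₀ → c,
      Φ (testPoint Φ z o (extendPoint p a) R₀) o ∉ W) :
    ∃ R₀ R E : Finset I, R₀ ⊆ R ∧ o ∈ R ∧ (R : Set I) ⊆ J ∧ (∀ i ∈ E, i ∉ J) ∧ E.Nonempty ∧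
      ∃ a : R₀ → c, Nonempty (Obstruction Φ z o (extendPoint p a) R₀ R E) := by
  set k := Φ.symm (Function.update z o x) with hk
  have hΦk : Φ k = Function.update z o x := by simp [hk]
  obtain ⟨F₁, n, n_open, mem_n, n_supp, hn⟩ :=
    (hW.preimage ((continuous_apply o).comp Φ.continuous)).exists_box (f := k)
      (by simpa [hΦk] using hxW)
  obtain ⟨Fm, m, m_open, mem_m, m_supp, hm⟩ :=
    ((isOpen_univ_pi_of_support n_open n_supp).preimage Φ.symm.continuous).exists_box
      (f := Function.update z o x) (fun i _ => mem_n i)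
  obtain ⟨F₂, n', n'_open, mem_n', n'_supp, hn'⟩ :=
    ((isOpen_univ_pi_of_support m_open m_supp).preimage Φ.continuous).exists_box
      (f := k) (by simpa [hΦk] using mem_m)
  let R₀ : Finset I := (F₁ ∪ F₂).filter (· ∈ J)
  have hR₀J : (R₀ : Set I) ⊆ J := fun i hi => (Finset.mem_filter.1 hi).2
  have hex : ∀ i : R₀, ∃ y : c, (y : X) ∈ n i ∩ n' i := fun i => by
    obtain ⟨y, hy, hyc⟩ := mem_closure_iff.1 (hGc (hx i (hR₀J i.2))) _
      ((n_open i).inter (n'_open i)) ⟨mem_n i, mem_n' i⟩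
    exact ⟨⟨y, hyc⟩, hy⟩
  choose a ha using hex
  set d := extendPoint p a with hd
  have hda : ∀ i ∈ R₀, d i ∈ n i ∩ n' i := fun i hi => by
    simpa only [hd, extendPoint, dif_pos hi] using ha ⟨i, hi⟩
  have hlopen : IsOpen {w : I → X | ∀ i ∈ R₀, Φ.symm w i ∈ n' i} := by
    have := isOpen_set_pi (s := n') R₀.finite_toSet fun i _ => n'_open i
    exact this.preimage Φ.symm.continuous
  obtain ⟨F₃, l, l_open, mem_l, l_supp, hl⟩ :=
    hlopen.exists_box (f := Φ d) (fun i hi => by simpa using (hda i hi).2)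
  have hmz : ∀ i, i ≠ o → z i ∈ m i := fun i hi => by
    simpa only [Function.update_of_ne hi] using mem_m i
  have hm'_open : ∀ i, IsOpen (Function.update m o Set.univ i) := fun i => by
    by_cases hi : i = o
    · subst hi
      simp
    · simpa only [Function.update_of_ne hi] using m_open i
  have hm'_supp : ∀ i ∉ Fm, Function.update m o Set.univ i = Set.univ := fun i hiF => by
    by_cases hi : i = o
    · subst hi
      simp
    · simpa only [Function.update_of_ne hi] using m_supp i hiF
  obtain ⟨Fp, b, b_open, mem_b, b_supp, hb⟩ :=
    ((isOpen_univ_pi_of_support hm'_open hm'_supp).preimage Φ.continuous).exists_box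
      (f := pullbackPoint Φ z o d) (fun i _ => by
        by_cases hi : i = o
        · subst hi
          simp
        · simpa [pullbackPoint, Function.update_of_ne hi] using hmz i hi)
  obtain ⟨F₄, q, q_open, mem_q, q_supp, hq⟩ :=
    ((isOpen_univ_pi_of_support b_open b_supp).preimage Φ.symm.continuous).exists_box
      (f := Function.update z o (Φ d o)) (fun i _ => mem_b i)
  let F : Finset I := insert o (F₁ ∪ F₂ ∪ F₃ ∪ F₄)
  let R : Finset I := F.filter (· ∈ J)
  let E : Finset I := F.filter (· ∉ J)
  have hRE : ∀ i, i ∉ R → i ∉ E → i ∉ F := by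
    intro i h₁ h₂ hi
    by_cases hJ : i ∈ J
    · exact h₁ (Finset.mem_filter.2 ⟨hi, hJ⟩)
    · exact h₂ (Finset.mem_filter.2 ⟨hi, hJ⟩)
  have hRE₀ : ∀ i, i ∉ R₀ → i ∉ E → i ∉ F₁ ∪ F₂ := by
    intro i h₁ h₂ hi
    by_cases hJ : i ∈ J
    · exact h₁ (Finset.mem_filter.2 ⟨hi, hJ⟩)
    · refine h₂ (Finset.mem_filter.2 ⟨?_, hJ⟩)
      simp only [F, Finset.mem_insert, Finset.mem_union] at hi ⊢
      tauto
  have hn_supp : ∀ i, i ∉ R₀ → i ∉ E → n i = Set.univ := fun i h₁ h₂ =>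
    n_supp i fun h => hRE₀ i h₁ h₂ (Finset.mem_union_left _ h)
  refine ⟨R₀, R, E, fun i hi => ?_, ?_, fun i hi => (Finset.mem_filter.1 hi).2,
    fun i hi => (Finset.mem_filter.1 hi).2, ?_, a, ⟨{
      W := W
      n := n
      m := m
      n' := n'
      k := k
      l := l
      p := b
      q := q
      testPoint_notMem := hmiss R₀ hR₀J a
      map_n := fun y hy => hn hy
      n_support := hn_supp
      mem_n := fun i hi => (hda i hi).1
      m_open := m_open
      symm_m := fun w hw => hm hw
      map_n' := fun y hy => hn' hy
      n'_support := fun i h₁ h₂ =>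
        n'_supp i fun h => hRE₀ i h₁ h₂ (Finset.mem_union_right _ h)
      mem_n' := mem_n'
      l_open := l_open
      mem_l := mem_l
      l_support := fun i h₁ h₂ => l_supp i fun h => hRE i h₁ h₂ (by simp [F, h])
      symm_l := fun w hw => hl hw
      mem_p := mem_b
      map_p := fun y hy i hi => by
        simpa only [Function.update_of_ne hi] using hb hy i (mem_univ i)
      q_open := q_open
      mem_q := mem_q
      q_support := fun i h₁ h₂ => q_supp i fun h => hRE i h₁ h₂ (by simp [F, h])
      symm_q := fun w hw => hq hw }⟩⟩
  · obtain ⟨hi₁, hi₂⟩ := Finset.mem_filter.1 hi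
    refine Finset.mem_filter.2 ⟨?_, hi₂⟩
    simp only [F, Finset.mem_insert, Finset.mem_union] at hi₁ ⊢
    tauto
  · exact Finset.mem_filter.2 ⟨Finset.mem_insert_self _ _, ho⟩
  · rw [Finset.nonempty_iff_ne_empty]
    intro hE
    refine hmiss R₀ hR₀J a (hn fun i _ => ?_)
    by_cases hi : i ∈ R₀
    · simpa only [testPoint, if_pos hi] using (hda i hi).1
    · rw [hn_supp i hi (by simp [hE])]
      exact mem_univ _

/-- A countable intersection of preimages of a `G^c_δ`-set is a `G^c_δ`-set. -/
theorem GcSet.iInter_preimage {Y : Type u} [TopologicalSpace Y] {G : Set X} (hG : GcSet ℵ₀ G)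
    {J : Set I} (hJ : J.Countable) {f : I → Y → X} (hf : ∀ i, Continuous (f i)) :
    GcSet ℵ₀ {y | ∀ i ∈ J, f i y ∈ G} := by
  obtain ⟨𝒰, hcard, hopen, h₁, h₂⟩ := hG
  refine ⟨(fun t : I × Set X => f t.1 ⁻¹' t.2) '' J ×ˢ 𝒰, ?_, ?_, ?_, ?_⟩
  · exact Cardinal.le_aleph0_iff_set_countable.2
      ((hJ.prod (Cardinal.le_aleph0_iff_set_countable.1 hcard)).image _)
  · rintro _ ⟨⟨i, U⟩, ⟨-, hU⟩, rfl⟩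
    exact (hopen U hU).preimage (hf i)
  · ext y
    simp only [mem_ofPred_eq, mem_sInter, forall_mem_image, mem_prod, Prod.forall, h₁]
    exact ⟨fun h i U hiU => h i hiU.1 U hiU.2, fun h i hi U hU => h i U ⟨hi, hU⟩⟩
  · refine Subset.antisymm (fun y hy => ?_) fun y hy i hi => ?_
    · simp only [mem_iInter, forall_mem_image, mem_prod, Prod.forall]
      rintro i U ⟨hi, hU⟩
      have := hy i hi
      rw [h₁] at this
      exact subset_closure (this U hU)
    · rw [h₂]
      simp only [mem_iInter, forall_mem_image, mem_prod, Prod.forall] at hy ⊢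
      exact fun U hU => (hf i).closure_preimage_subset U (hy i U ⟨hi, hU⟩)

/-- A countable set of coordinates that meets every nonempty obstructing set disjoint
from it. -/
theorem exists_countable_meeting_obstructions (hpi : piChar X ≤ ℵ₀) (Φ : (I → X) ≃ₜ (I → X))
    (z : I → X) (o : I) (p : X) {c : Set X} (hc : c.Countable) :
    ∃ J : Set I, J.Countable ∧ o ∈ J ∧ ∀ R₀ R E : Finset I, R₀ ⊆ R → o ∈ R → (R : Set I) ⊆ J →
      Disjoint E R → E.Nonempty → ∀ a : R₀ → c,
        Nonempty (Obstruction Φ z o (extendPoint p a) R₀ R E) → ∃ i ∈ E, i ∈ J := by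
  have htrans : ∀ (R R₀ : Finset I) (a : R₀ → c), ∃ A : Set I, A.Countable ∧ (R₀ ⊆ R → o ∈ R →
      ∀ E : Finset I, Disjoint E R → Nonempty (Obstruction Φ z o (extendPoint p a) R₀ R E) →
        E.Nonempty → ∃ i ∈ E, i ∈ A) := by
    intro R R₀ a
    by_cases h : R₀ ⊆ R ∧ o ∈ R
    · obtain ⟨A, hA, hAE⟩ := exists_countable_transversal
        (fun E => Disjoint E R ∧ Nonempty (Obstruction Φ z o (extendPoint p a) R₀ R E))
        fun S hS hdisj => countable_of_obstruction hpi Φ z _ h.1 h.2 hdisj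
          (fun E hE => (hS E hE).1) fun E hE => (hS E hE).2
      exact ⟨A, hA, fun _ _ E h₁ h₂ => hAE E ⟨h₁, h₂⟩⟩
    · exact ⟨∅, countable_empty, fun h₁ h₂ => absurd ⟨h₁, h₂⟩ h⟩
  choose A hA hAE using htrans
  have := hc.to_subtype
  obtain ⟨J, hJ, ho, hclosed⟩ := exists_countable_closed
    (fun R => ⋃ R₀ ∈ R.powerset, ⋃ a : R₀ → c, A R R₀ a)
    (fun R => R.powerset.countable_toSet.biUnion fun R₀ _ => countable_iUnion fun a => hA R R₀ a) o
  refine ⟨J, hJ, ho, fun R₀ R E hR₀ hoR hRJ hdisj hne a hob => ?_⟩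
  obtain ⟨i, hi, hiA⟩ := hAE R R₀ a hR₀ hoR E hdisj hob hne
  exact ⟨i, hi, hclosed R hRJ
    (mem_biUnion (Finset.mem_coe.2 (Finset.mem_powerset.2 hR₀)) (mem_iUnion.2 ⟨a, hiA⟩))⟩

end PowerHomogeneousSpaces

/-- Lemma 4.4. -/
theorem stmt15 {X : Type u} [TopologicalSpace X] (hph : PowerHomogeneous X)
    (hpi : piChar X ≤ ℵ₀)
    (hex : ∃ G : Set X, G.Nonempty ∧ IsClosed G ∧ GcSet ℵ₀ G ∧ Subseparable G) :
    ∀ x : X, ∃ G : Set X, x ∈ G ∧ IsClosed G ∧ GcSet ℵ₀ G ∧ Subseparable G := by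
  classical
  intro x₀
  obtain ⟨I, ⟨o⟩, hhom⟩ := hph
  obtain ⟨G, ⟨p, hp⟩, hclosed, hGc, c, hc, hcG⟩ := hex
  set z : I → X := fun _ => x₀ with hz
  obtain ⟨Φ, hΦ⟩ := hhom (fun _ => p) z
  obtain ⟨J, hJ, ho, hmeet⟩ := exists_countable_meeting_obstructions hpi Φ z o p hc
  have hcont : ∀ i, Continuous fun y : X => Φ.symm (Function.update z o y) i := fun i =>
    (continuous_apply i).comp (Φ.symm.continuous.comp (continuous_const.update o continuous_id))
  refine ⟨{y | ∀ i ∈ J, Φ.symm (Function.update z o y) i ∈ G}, fun i _ => ?_, ?_,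
    hGc.iInter_preimage hJ hcont,
    ⋃ R₀ : {R₀ : Finset I // (R₀ : Set I) ⊆ J},
      range fun a : R₀.1 → c => Φ (testPoint Φ z o (extendPoint p a) R₀.1) o, ?_, fun x hx => ?_⟩
  · have : Function.update z o x₀ = z := Function.update_eq_self o z
    rw [this, ← hΦ, Φ.symm_apply_apply]
    exact hp
  · simp only [ofPred_forall]
    exact isClosed_biInter fun i _ => hclosed.preimage (hcont i)
  · have := hc.to_subtype
    have hfin : {R₀ : Finset I | (R₀ : Set I) ⊆ J}.Countable :=
      ((countable_ofPred_finite_subset hJ).preimage Finset.coe_injective).mono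
        fun R₀ h => And.intro R₀.finite_toSet h
    have : Countable {R₀ : Finset I // (R₀ : Set I) ⊆ J} := hfin.to_subtype
    exact countable_iUnion fun R₀ => countable_range _
  · refine mem_closure_iff.2 fun W hW hxW => ?_
    by_contra hcon
    obtain ⟨R₀, R, E, hR₀, hoR, hRJ, hEJ, hne, a, hob⟩ :=
      exists_obstruction Φ z ho hcG hW hxW hx p fun R₀ hR₀ a ha =>
        hcon ⟨_, ha, mem_iUnion.2 ⟨⟨R₀, hR₀⟩, a, rfl⟩⟩
    obtain ⟨i, hi, hiJ⟩ := hmeet R₀ R E hR₀ hoR hRJ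
      (Finset.disjoint_left.2 fun i hi hiR => hEJ i hi (hRJ hiR)) hne a hob
    exact hEJ i hi hiJ
end

section
/- Let X be a power homogeneous compactum admitting a countable cover 𝒞 such that each C ∈ 𝒞 is countably tight and dense in X. Then |X| ≤ 𝔠. -/
open Cardinal Set TopologicalSpace

universe u

/-- The well-ordered type of the countable ordinals. -/
abbrev CountableOrdinal : Type u := (ℵ₁ : Cardinal.{u}).ord.ToType

namespace CountableOrdinal

theorem mk_eq : #CountableOrdinal.{u} = ℵ₁ := by simp

instance uncountable : Uncountable CountableOrdinal.{u} := by
  rw [← aleph0_lt_mk_iff, mk_eq, ← aleph_one_le_iff]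

theorem countable_Iio (a : CountableOrdinal.{u}) : (Iio a).Countable := by
  rw [← le_aleph0_iff_set_countable, ← lt_aleph_one_iff]
  simpa using mk_Iio_lt a (by simp)

theorem countable_Iic (a : CountableOrdinal.{u}) : (Iic a).Countable := by
  rw [← Iio_insert]
  exact (countable_Iio a).insert a

theorem exists_forall_lt {s : Set CountableOrdinal.{u}} (hs : s.Countable) :
    ∃ a, ∀ b ∈ s, b < a := by
  by_contra! h
  refine not_countable_univ (α := CountableOrdinal.{u}) ?_
  refine (hs.biUnion fun b _ => countable_Iic b).mono fun a _ => ?_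
  obtain ⟨b, hb, hab⟩ := h a
  exact mem_biUnion hb hab

theorem exists_injective {ι : Type u} [Uncountable ι] :
    ∃ f : CountableOrdinal.{u} → ι, Function.Injective f := by
  have : #CountableOrdinal.{u} ≤ #ι := by
    rw [mk_eq]; exact aleph_one_le_iff.2 aleph0_lt_mk
  obtain ⟨f⟩ := this
  exact ⟨f, f.injective⟩

theorem exists_rec {β : Type*} (step : Set β → β) :
    ∃ F : CountableOrdinal.{u} → β, ∀ a, F a = step (F '' Iio a) := by
  let G : ∀ a : CountableOrdinal.{u}, (∀ b, b < a → β) → β :=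
    fun a ih => step {y | ∃ b, ∃ h : b < a, ih b h = y}
  refine ⟨WellFounded.fix wellFounded_lt G, fun a => ?_⟩
  rw [WellFounded.fix_eq]
  change step _ = step _
  congr 1
  ext y
  simp

end CountableOrdinal

theorem Set.Countable.finset_subsets {T : Type*} {s : Set T} (hs : s.Countable) :
    {G : Finset T | (G : Set T) ⊆ s}.Countable := by
  refine ((countable_ofPred_finite_subset hs).preimage
    (f := fun G : Finset T => (G : Set T)) Finset.coe_injective).mono fun G hG => ?_
  exact mem_preimage.2 ⟨G.finite_toSet, hG⟩

/-- Closing off a countable set under finitary operations with countable values. -/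
theorem exists_countable_closed_s17 {T : Type*} (op : Finset T → Set T)
    (hop : ∀ G, (op G).Countable) (s₀ : Set T) (hs₀ : s₀.Countable) :
    ∃ S : Set T, S.Countable ∧ s₀ ⊆ S ∧ ∀ G : Finset T, (G : Set T) ⊆ S → op G ⊆ S := by
  let next : Set T → Set T := fun S => S ∪ ⋃ G ∈ {G : Finset T | (G : Set T) ⊆ S}, op G
  let A : ℕ → Set T := fun n => next^[n] s₀
  have hA : ∀ n, A (n + 1) = next (A n) := fun n => Function.iterate_succ_apply' _ _ _
  have hmono : Monotone A := monotone_nat_of_le_succ fun n => by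
    rw [hA]; exact subset_union_left
  have hcount : ∀ n, (A n).Countable := by
    intro n
    induction n with
    | zero => exact hs₀
    | succ n ih =>
      rw [hA]
      exact ih.union (ih.finset_subsets.biUnion fun G _ => hop G)
  refine ⟨⋃ n, A n, countable_iUnion hcount, subset_iUnion A 0, fun G hG => ?_⟩
  obtain ⟨n, hn⟩ := hmono.directed_le.exists_mem_subset_of_finset_subset_biUnion hG
  refine subset_trans ?_ (subset_iUnion A (n + 1))
  rw [hA]
  exact subset_union_of_subset_right (subset_biUnion_of_mem (u := op) hn) _

theorem mk_iUnion_le_continuum {α ι : Type u} {f : ι → Set α} (hι : #ι ≤ 𝔠)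
    (hf : ∀ i, #(f i) ≤ 𝔠) : #(⋃ i, f i) ≤ 𝔠 :=
  (mk_iUnion_le f).trans <| (mul_le_mul' hι (ciSup_le' hf)).trans continuum_mul_self.le

theorem mk_biUnion_le_continuum {α ι : Type u} {s : Set ι} {f : ι → Set α} (hs : #s ≤ 𝔠)
    (hf : ∀ i ∈ s, #(f i) ≤ 𝔠) : #(⋃ i ∈ s, f i) ≤ 𝔠 := by
  rw [biUnion_eq_iUnion]
  exact mk_iUnion_le_continuum hs fun i => hf i i.2

theorem Set.Countable.mk_le_continuum {α : Type u} {s : Set α} (hs : s.Countable) : #s ≤ 𝔠 :=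
  hs.le_aleph0.trans aleph0_le_continuum

theorem mk_countable_subsets_le_continuum {α : Type u} {s : Set α} (hs : #s ≤ 𝔠) :
    #{B : Set α | B ⊆ s ∧ B.Countable} ≤ 𝔠 := by
  have h := mk_bounded_subset_le s ℵ₀
  have h2 : (max #s ℵ₀) ^ (ℵ₀ : Cardinal.{u}) ≤ 𝔠 := by
    rw [← continuum_power_aleph0]
    exact power_le_power_right (max_le hs aleph0_le_continuum)
  refine le_trans ?_ (h.trans h2)
  exact mk_le_of_injective (f := fun B => ⟨B.1, B.2.1, B.2.2.le_aleph0⟩)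
    fun B B' hB => Subtype.ext (by simpa using hB)

/-- Closing off under operations of countable arity. -/
theorem exists_closed_of_countable_subsets {T : Type u} (φ : Set T → Set T)
    (hφ : ∀ B : Set T, B.Countable → #(φ B) ≤ 𝔠) :
    ∃ Y : Set T, #Y ≤ 𝔠 ∧ ∀ B ⊆ Y, B.Countable → φ B ⊆ Y := by
  obtain ⟨F, hF⟩ := CountableOrdinal.exists_rec.{u}
    fun 𝒮 : Set (Set T) => ⋃ B ∈ {B : Set T | B ⊆ ⋃₀ 𝒮 ∧ B.Countable}, φ B
  have hcard : ∀ a, #(F a) ≤ 𝔠 := by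
    intro a
    induction a using WellFoundedLT.induction with
    | ind a ih =>
      rw [hF]
      refine mk_biUnion_le_continuum (mk_countable_subsets_le_continuum ?_) fun B hB => hφ B hB.2
      rw [sUnion_image]
      exact mk_biUnion_le_continuum (CountableOrdinal.countable_Iio a).mk_le_continuum
        fun b hb => ih b hb
  refine ⟨⋃ a, F a, mk_iUnion_le_continuum ?_ hcard, fun B hB hBc => ?_⟩
  · rw [CountableOrdinal.mk_eq]; exact aleph_one_le_continuum
  · choose! r hr using fun x (hx : x ∈ B) => mem_iUnion.1 (hB hx)
    obtain ⟨a, ha⟩ := CountableOrdinal.exists_forall_lt (hBc.image r)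
    refine subset_trans ?_ (subset_iUnion F a)
    rw [hF]
    refine subset_biUnion_of_mem (u := φ) ⟨fun x hx => ?_, hBc⟩
    exact ⟨F (r x), mem_image_of_mem F (ha _ (mem_image_of_mem r hx)), hr x hx⟩

section Tightness

variable {X : Type u} [TopologicalSpace X]

/-- A subset that is countably tight in its subspace topology. -/
def CountablyTight (C : Set X) : Prop :=
  ∀ A ⊆ C, ∀ x ∈ C, x ∈ closure A → ∃ B ⊆ A, B.Countable ∧ x ∈ closure B

theorem countablyTight_of_tightness_le {C : Set X} (h : tightness ↥C ≤ ℵ₀) :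
    CountablyTight C := by
  have hne : {κ : Cardinal.{u} | ℵ₀ ≤ κ ∧ ∀ (A : Set C) (x : C), x ∈ closure A →
      ∃ B ⊆ A, #B ≤ κ ∧ x ∈ closure B}.Nonempty :=
    ⟨max ℵ₀ #C, le_max_left _ _, fun A x hx =>
      ⟨A, Subset.rfl, (mk_set_le A).trans (le_max_right _ _), hx⟩⟩
  obtain ⟨-, ht⟩ := csInf_mem hne
  intro A hA x hx hxA
  obtain ⟨B, hBA, hB, hxB⟩ := ht (Subtype.val ⁻¹' A) ⟨x, hx⟩ (by
    rw [closure_subtype, Subtype.image_preimage_coe, inter_eq_right.2 hA]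
    exact hxA)
  refine ⟨Subtype.val '' B, image_subset_iff.2 hBA, ?_, closure_subtype.1 hxB⟩
  exact (le_aleph0_iff_set_countable.1 (hB.trans h)).image _

/-- A closed set on which uncountably many pairs of disjoint closed sets are independent. -/
def IndependentOn (H : Set X) : Prop :=
  ∃ W : CountableOrdinal.{u} → Bool → Set X, (∀ i b, IsClosed (W i b)) ∧
    (∀ i, Disjoint (W i true) (W i false)) ∧ ∀ σ : CountableOrdinal.{u} → Bool,
      ∃ x ∈ H, ∀ i, x ∈ W i (σ i)

theorem IndependentOn.exists_subset_disjoint [CompactSpace X] {H C : Set X} (hH : IsClosed H)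
    (hind : IndependentOn H) (hC : CountablyTight C) :
    ∃ H' ⊆ H, IsClosed H' ∧ IndependentOn H' ∧ Disjoint H' C := by
  obtain ⟨W, hWc, hWd, hW⟩ := hind
  obtain ⟨e⟩ : Nonempty (CountableOrdinal.{u} ⊕ CountableOrdinal.{u} ⊕ CountableOrdinal.{u} ↪
      CountableOrdinal.{u}) := by
    rw [← Cardinal.le_def]
    simp [add_eq_self (aleph0_le_aleph 1)]
  have hW3 : ∀ σ₁ σ₂ σ₃ : CountableOrdinal.{u} → Bool, ∃ x ∈ H,
      (∀ i, x ∈ W (e (.inl i)) (σ₁ i)) ∧ (∀ i, x ∈ W (e (.inr (.inl i))) (σ₂ i)) ∧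
      ∀ i, x ∈ W (e (.inr (.inr i))) (σ₃ i) := by
    intro σ₁ σ₂ σ₃
    obtain ⟨x, hxH, hx⟩ := hW (Function.extend e (Sum.elim σ₁ (Sum.elim σ₂ σ₃)) fun _ => true)
    refine ⟨x, hxH, fun i => ?_, fun i => ?_, fun i => ?_⟩
    · simpa [e.injective.extend_apply] using hx (e (.inl i))
    · simpa [e.injective.extend_apply] using hx (e (.inr (.inl i)))
    · simpa [e.injective.extend_apply] using hx (e (.inr (.inr i)))
  let S : CountableOrdinal.{u} → Set X := fun a =>
    {x | x ∈ H ∧ ∀ b, x ∈ W (e (.inl b)) (decide (b < a))}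
  by_cases hcase : ∃ (a : CountableOrdinal.{u}) (τ : CountableOrdinal.{u} → Bool),
      ∀ x ∈ C, x ∈ S a → ¬ ∀ i, x ∈ W (e (.inr (.inl i))) (τ i)
  · obtain ⟨a, τ, hτ⟩ := hcase
    refine ⟨(H ∩ ⋂ b, W (e (.inl b)) (decide (b < a))) ∩ ⋂ i, W (e (.inr (.inl i))) (τ i),
      fun x hx => hx.1.1, ?_, ⟨fun i => W (e (.inr (.inr i))), fun i => hWc _, fun i => hWd _,
      fun σ => ?_⟩, ?_⟩
    · exact (hH.inter (isClosed_iInter fun _ => hWc _ _)).inter (isClosed_iInter fun _ => hWc _ _)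
    · obtain ⟨x, hxH, h1, h2, h3⟩ := hW3 (fun b => decide (b < a)) τ σ
      exact ⟨x, ⟨⟨hxH, mem_iInter.2 h1⟩, mem_iInter.2 h2⟩, h3⟩
    · rw [disjoint_left]
      rintro x ⟨⟨hxH, h1⟩, h2⟩ hxC
      exact hτ x hxC ⟨hxH, mem_iInter.1 h1⟩ (mem_iInter.1 h2)
  · push Not at hcase
    refine ⟨(H ∩ closure (⋃ a, C ∩ S a)) ∩ ⋂ b, W (e (.inl b)) true, fun x hx => hx.1.1,
      ?_, ⟨fun i => W (e (.inr (.inl i))), fun i => hWc _, fun i => hWd _, fun τ => ?_⟩, ?_⟩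
    · exact (hH.inter isClosed_closure).inter (isClosed_iInter fun _ => hWc _ _)
    · choose x hxC hxS hxτ using fun a => hcase a τ
      obtain ⟨z, hz⟩ := exists_clusterPt_of_compactSpace (Filter.map x Filter.atTop)
      have hmem : ∀ T : Set X, IsClosed T → (∀ᶠ a in Filter.atTop, x a ∈ T) → z ∈ T := by
        intro T hT hxT
        rw [← hT.closure_eq, mem_closure_iff_clusterPt]
        exact hz.mono (Filter.le_principal_iff.2 hxT)
      refine ⟨z, ⟨⟨hmem H hH (.of_forall fun a => (hxS a).1),
        hmem _ isClosed_closure (.of_forall fun a => subset_closure (mem_iUnion.2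
          ⟨a, hxC a, hxS a⟩))⟩, mem_iInter.2 fun b => hmem _ (hWc _ _) ?_⟩,
        fun i => hmem _ (hWc _ _) (.of_forall fun a => hxτ a i)⟩
      obtain ⟨b', hb'⟩ := CountableOrdinal.exists_forall_lt (countable_singleton b)
      filter_upwards [Filter.eventually_ge_atTop b'] with a ha
      simpa [(hb' b rfl).trans_le ha] using (hxS a).2 b
    · rw [disjoint_left]
      rintro z ⟨⟨hzH, hzcl⟩, hzW⟩ hzC
      obtain ⟨B, hBA, hBc, hzB⟩ := hC _ (iUnion_subset fun a => inter_subset_left) z hzC hzcl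
      choose! r hr using fun x (hx : x ∈ B) => mem_iUnion.1 (hBA hx)
      obtain ⟨a, ha⟩ := CountableOrdinal.exists_forall_lt (hBc.image r)
      refine disjoint_left.1 (hWd (e (.inl a))) (mem_iInter.1 hzW a) ?_
      refine closure_minimal (fun x hx => ?_) (hWc _ _) hzB
      simpa [(ha _ (mem_image_of_mem r hx)).not_gt] using (hr x hx).2.2 a

theorem not_independentOn_univ [CompactSpace X] {𝒞 : Set (Set X)} (hc : 𝒞.Countable)
    (hcov : ⋃₀ 𝒞 = Set.univ) (hC : ∀ C ∈ 𝒞, CountablyTight C) :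
    ¬ IndependentOn (Set.univ : Set X) := by
  intro hind
  obtain ⟨W, -, -, hW⟩ := id hind
  obtain ⟨x₀, -⟩ := hW fun _ => true
  obtain ⟨C₀, hC₀, -⟩ := mem_sUnion.1 (hcov.ge (mem_univ x₀))
  obtain ⟨c, rfl⟩ := hc.exists_eq_range ⟨C₀, hC₀⟩
  choose f hfs hfc hfi hfd using fun (n : ℕ) (H : {H : Set X // IsClosed H ∧ IndependentOn H}) =>
    H.2.2.exists_subset_disjoint H.2.1 (hC _ (mem_range_self n))
  let H : ℕ → {H : Set X // IsClosed H ∧ IndependentOn H} := fun n =>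
    n.rec ⟨Set.univ, isClosed_univ, hind⟩ fun n H => ⟨f n H, hfc n H, hfi n H⟩
  obtain ⟨x, hx⟩ := IsCompact.nonempty_iInter_of_sequence_nonempty_isCompact_isClosed
    (fun n => (H n).1) (fun n => hfs n (H n))
    (fun n => by
      obtain ⟨W, -, -, hW⟩ := (H n).2.2
      obtain ⟨x, hx, -⟩ := hW fun _ => true
      exact ⟨x, hx⟩) (H 0).2.1.isCompact fun n => (H n).2.1
  obtain ⟨_, ⟨n, rfl⟩, hn⟩ := mem_sUnion.1 (hcov.ge (mem_univ x))
  exact disjoint_left.1 (hfd n (H n)) (mem_iInter.1 hx (n + 1)) hn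

/-- A finitely independent family of pairs of sets with disjoint closures. -/
theorem independentOn_univ_of_finite [CompactSpace X] {ι : Type u} [Uncountable ι]
    (U : ι → Bool → Set X) (hd : ∀ i, Disjoint (closure (U i true)) (closure (U i false)))
    (hU : ∀ (E : Finset ι) (σ : ι → Bool), ∃ x, ∀ i ∈ E, x ∈ U i (σ i)) :
    IndependentOn (Set.univ : Set X) := by
  obtain ⟨g, hg⟩ := CountableOrdinal.exists_injective (ι := ι)
  refine ⟨fun i b => closure (U (g i) b), fun i b => isClosed_closure, fun i => hd _,
    fun σ => ?_⟩
  have := CompactSpace.iInter_nonempty (t := fun i => closure (U (g i) (σ i)))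
    (fun i => isClosed_closure) fun E => ?_
  · obtain ⟨x, hx⟩ := this
    exact ⟨x, mem_univ x, mem_iInter.1 hx⟩
  · obtain ⟨x, hx⟩ := hU (E.map ⟨g, hg⟩) (Function.extend g σ fun _ => true)
    refine ⟨x, mem_iInter₂.2 fun i hi => subset_closure ?_⟩
    simpa [hg.extend_apply] using hx (g i) (Finset.mem_map_of_mem ⟨g, hg⟩ hi)

end Tightness

section PiBase

variable {X : Type u} [TopologicalSpace X]

/-- The point `x` has a countable local π-base. -/
def HasCountablePiBaseAt (x : X) : Prop :=
  ∃ V : ℕ → Set X, (∀ n, IsOpen (V n) ∧ (V n).Nonempty) ∧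
    ∀ U, IsOpen U → x ∈ U → ∃ n, V n ⊆ U

/-- A pair of open sets with disjoint closures. -/
def IsSeparatedPair (π : Bool → Set X) : Prop :=
  (∀ b, IsOpen (π b)) ∧ Disjoint (closure (π true)) (closure (π false))

/-- A family of separated pairs that is independent on `V`. -/
def IndependentBelow (V : Set X) (𝒬 : Set (Bool → Set X)) : Prop :=
  (∀ π ∈ 𝒬, IsSeparatedPair π) ∧ ∀ (E : Finset (Bool → Set X)) (σ : (Bool → Set X) → Bool),
    (E : Set (Bool → Set X)) ⊆ 𝒬 → (V ∩ ⋂ π ∈ E, π (σ π)).Nonempty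

theorem exists_maximal_independentBelow {V : Set X} (hV : V.Nonempty) :
    ∃ 𝒬, Maximal (IndependentBelow V) 𝒬 := by
  obtain ⟨𝒬, -, h𝒬⟩ := zorn_subset_nonempty {𝒬 | IndependentBelow V 𝒬} (fun c hc hchain hne => by
    refine ⟨⋃₀ c, ⟨?_, fun E σ hE => ?_⟩, fun s hs => subset_sUnion_of_mem hs⟩
    · rintro π ⟨s, hs, hπ⟩
      exact (hc hs).1 π hπ
    · rw [sUnion_eq_biUnion] at hE
      obtain ⟨s, hs, hEs⟩ := hchain.directedOn.exists_mem_subset_of_finset_subset_biUnion hne hE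
      exact (hc hs).2 E σ hEs) ∅ (by
    refine ⟨by simp, fun E σ hE => ?_⟩
    obtain rfl : E = ∅ := by simpa [subset_empty_iff] using hE
    simpa using hV)
  exact ⟨𝒬, h𝒬⟩

theorem IndependentBelow.countable [CompactSpace X]
    (hX : ¬ IndependentOn (Set.univ : Set X)) {V : Set X} {𝒬 : Set (Bool → Set X)}
    (h : IndependentBelow V 𝒬) : 𝒬.Countable := by
  by_contra hunc
  have : Uncountable 𝒬 := by rwa [← not_countable_iff, countable_coe_iff]
  refine hX (independentOn_univ_of_finite (ι := 𝒬) (fun π => π.1) (fun π => (h.1 π π.2).2)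
    fun E σ => ?_)
  obtain ⟨x, -, hx⟩ := h.2 (E.map (Function.Embedding.subtype _))
    (Function.extend Subtype.val σ fun _ => true) (by simp)
  refine ⟨x, fun π hπ => ?_⟩
  have := mem_iInter₂.1 hx π.1 (Finset.mem_map_of_mem (Function.Embedding.subtype _) hπ)
  rwa [Subtype.val_injective.extend_apply] at this

theorem exists_hasCountablePiBaseAt [CompactSpace X] [T2Space X] [Nonempty X]
    (hX : ¬ IndependentOn (Set.univ : Set X)) : ∃ x : X, HasCountablePiBaseAt x := by
  by_contra! hno
  have hmax : ∀ V : Set X, ∃ 𝒬 : Set (Bool → Set X), 𝒬.Countable ∧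
      (V.Nonempty → Maximal (IndependentBelow V) 𝒬) := fun V => by
    by_cases hV : V.Nonempty
    · obtain ⟨𝒬, h𝒬⟩ := exists_maximal_independentBelow hV
      exact ⟨𝒬, h𝒬.prop.countable hX, fun _ => h𝒬⟩
    · exact ⟨∅, countable_empty, fun h => absurd h hV⟩
  choose 𝒬 h𝒬c h𝒬 using hmax
  obtain ⟨S, hSc, hS₀, hS⟩ := exists_countable_closed_s17
    (fun G : Finset (Set X) => ⋃ V ∈ G, (fun F : Set ((Bool → Set X) × Bool) =>
      V ∩ ⋂ q ∈ F, q.1 q.2) '' {F | F.Finite ∧ F ⊆ 𝒬 V ×ˢ Set.univ})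
    (fun G => G.countable_toSet.biUnion fun V _ =>
      (countable_ofPred_finite_subset ((h𝒬c V).prod countable_univ)).image _)
    {Set.univ} (countable_singleton _)
  let 𝒱 : Set (Set X) := {V | V ∈ S ∧ IsOpen V ∧ V.Nonempty}
  have h𝒱 : ∀ V ∈ 𝒱, ∀ (E : Finset (Bool → Set X)) (σ : (Bool → Set X) → Bool),
      (E : Set (Bool → Set X)) ⊆ 𝒬 V → (V ∩ ⋂ π ∈ E, π (σ π)) ∈ 𝒱 := by
    intro V hV E σ hE
    refine ⟨hS {V} (by simpa using hV.1) ?_, hV.2.1.inter ?_, (h𝒬 V hV.2.2).prop.2 E σ hE⟩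
    · refine mem_iUnion₂.2 ⟨V, by simp, (fun π => (π, σ π)) '' E, ⟨E.finite_toSet.image _, ?_⟩, ?_⟩
      · rintro _ ⟨π, hπ, rfl⟩
        exact ⟨hE hπ, mem_univ _⟩
      · simp
    · exact isOpen_biInter_finset fun π hπ => ((h𝒬 V hV.2.2).prop.1 π (hE hπ)).1 _
  have huniv : Set.univ ∈ 𝒱 := ⟨hS₀ rfl, isOpen_univ, univ_nonempty⟩
  have hpair : ∀ x : X, ∃ π : Bool → Set X, IsSeparatedPair π ∧ x ∈ π true ∧
      ∀ V ∈ 𝒱, (V ∩ π false).Nonempty := by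
    intro x
    obtain ⟨v, hv⟩ := (hSc.mono fun V (hV : V ∈ 𝒱) => hV.1).exists_eq_range ⟨_, huniv⟩
    have hvn : ∀ n, v n ∈ 𝒱 := fun n => hv ▸ mem_range_self n
    obtain ⟨U, hUo, hxU, hU⟩ : ∃ U, IsOpen U ∧ x ∈ U ∧ ∀ V ∈ 𝒱, ¬ V ⊆ U := by
      by_contra! hcon
      refine hno x ⟨v, fun n => (hvn n).2, fun U hUo hxU => ?_⟩
      obtain ⟨V, hV, hVU⟩ := hcon U hUo hxU
      obtain ⟨n, rfl⟩ := hv.le hV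
      exact ⟨n, hVU⟩
    obtain ⟨O, hO, hxO, hOU⟩ := normal_exists_closure_subset isClosed_singleton hUo
      (singleton_subset_iff.2 hxU)
    obtain ⟨O', hO', hxO', hO'O⟩ := normal_exists_closure_subset isClosed_singleton hO hxO
    refine ⟨fun b => if b then O' else (closure O)ᶜ, ⟨?_, ?_⟩, ?_, fun V hV => ?_⟩
    · rintro (_ | _)
      · simp
      · simpa
    · have h1 : closure (closure O)ᶜ ⊆ Oᶜ :=
        closure_minimal (compl_subset_compl.2 subset_closure) hO.isClosed_compl
      simpa using (disjoint_compl_right.mono hO'O h1)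
    · simpa using hxO'
    · obtain ⟨y, hyV, hy⟩ := not_subset.1 fun h => hU V hV (h.trans hOU)
      exact ⟨y, hyV, by simpa using hy⟩
  choose π hπs hxπ hπ using hpair
  obtain ⟨t, ht⟩ := CompactSpace.elim_nhds_subcover (fun x => π x true)
    fun x => ((hπs x).1 true).mem_nhds (hxπ x)
  obtain ⟨V, hV, x, hVx⟩ : ∃ V ∈ 𝒱, ∃ x, ∀ V' ∈ 𝒱, V' ⊆ V → (V' ∩ π x true).Nonempty := by
    by_contra! hcon
    have hind : ∀ s : Finset X, ∃ V ∈ 𝒱, ∀ x ∈ s, V ∩ π x true = ∅ := by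
      classical
      intro s
      induction s using Finset.induction_on with
      | empty => exact ⟨_, huniv, by simp⟩
      | insert x s _ ih =>
        obtain ⟨V, hV, hVs⟩ := ih
        obtain ⟨V', hV', hV'V, hV'x⟩ := hcon V hV x
        refine ⟨V', hV', fun y hy => ?_⟩
        obtain rfl | hy := Finset.mem_insert.1 hy
        · exact hV'x
        · exact subset_empty_iff.1 ((inter_subset_inter_left _ hV'V).trans (hVs y hy).le)
    obtain ⟨V, hV, hVt⟩ := hind t
    obtain ⟨y, hy⟩ := hV.2.2
    obtain ⟨x, hxt, hyx⟩ := mem_iUnion₂.1 (ht.ge (mem_univ y))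
    exact (hVt x hxt).le ⟨hy, hyx⟩
  have hins : IndependentBelow V (insert (π x) (𝒬 V)) := by
    classical
    have h𝒬V := (h𝒬 V hV.2.2).prop
    refine ⟨fun ρ hρ => ?_, fun E σ hE => ?_⟩
    · obtain rfl | hρ := hρ
      · exact hπs x
      · exact h𝒬V.1 ρ hρ
    · have hE' : ((E.erase (π x) : Finset _) : Set (Bool → Set X)) ⊆ 𝒬 V := by
        rw [Finset.coe_erase, sdiff_singleton_subset_iff]
        exact hE
      have hmem := h𝒱 V hV _ σ hE'
      have hne : (V ∩ (⋂ ρ ∈ E.erase (π x), ρ (σ ρ)) ∩ π x (σ (π x))).Nonempty := by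
        cases σ (π x) with
        | true => exact hVx _ hmem inter_subset_left
        | false => exact hπ x _ hmem
      refine hne.mono ?_
      rintro y ⟨⟨hyV, hyE⟩, hyx⟩
      refine ⟨hyV, mem_iInter₂.2 fun ρ hρ => ?_⟩
      by_cases hρx : ρ = π x
      · rwa [hρx]
      · exact mem_iInter₂.1 hyE ρ (Finset.mem_erase.2 ⟨hρx, hρ⟩)
  have hmem : π x ∈ 𝒬 V := (h𝒬 V hV.2.2).le_of_ge hins (subset_insert _ _) (mem_insert _ _)
  have h1 := h𝒱 V hV {π x} (fun _ => false) (by simpa using hmem)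
  obtain ⟨y, ⟨-, hy⟩, hyt⟩ := hVx _ h1 inter_subset_left
  simp only [Finset.mem_singleton, iInter_iInter_eq_left] at hy
  exact disjoint_left.1 (hπs x).2 (subset_closure hyt) (subset_closure hy)

end PiBase

section Support

variable {X : Type u} [TopologicalSpace X] {I : Type u}

/-- A finitely supported modification `z` of `p` on `F` whose image under `f` is separated from
that of `p`, as witnessed by the coordinates in `G`. -/
structure Deviation (f : (I → X) → X) (p : I → X) where
  /-- the support of the modification -/
  F : Finset I
  /-- the witnessing coordinates -/
  G : Finset I
  /-- the modified point -/
  z : I → X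
  /-- the separating pair -/
  U : Bool → Set X
  subset : F ⊆ G
  eq_of_notMem : ∀ i ∉ F, z i = p i
  disjoint : Disjoint (closure (U true)) (closure (U false))
  mem_true : ∀ w, (∀ i ∈ G, w i = z i) → f w ∈ U true
  mem_false : ∀ w, (∀ i ∈ G, w i = p i) → f w ∈ U false

theorem Continuous.exists_finset_forall_mem {Y : Type*} [TopologicalSpace Y] {f : (I → X) → Y}
    (hf : Continuous f) {w : I → X} {U : Set Y} (hU : IsOpen U) (hw : f w ∈ U) :
    ∃ G : Finset I, ∀ w', (∀ i ∈ G, w' i = w i) → f w' ∈ U := by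
  obtain ⟨G, u, hu, hGu⟩ := isOpen_pi_iff.1 (hU.preimage hf) w hw
  exact ⟨G, fun w' hw' => hGu fun i hi => hw' i hi ▸ (hu i hi).2⟩

theorem Deviation.exists_disjoint [T2Space X] [CompactSpace X] {f : (I → X) → X}
    (hf : Continuous f) {p w : I → X} {A : Set I} (hw : ∀ a ∈ A, w a = p a) (hne : f w ≠ f p) :
    ∃ d : Deviation f p, Disjoint (d.F : Set I) A := by
  classical
  obtain ⟨U, hwU, hU, V, hpV, hV, hUV⟩ := exists_open_nhds_disjoint_closure hne
  obtain ⟨G₁, hG₁⟩ := hf.exists_finset_forall_mem hU hwU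
  obtain ⟨G₂, hG₂⟩ := hf.exists_finset_forall_mem hV hpV
  refine ⟨⟨{i ∈ G₁ | w i ≠ p i}, G₁ ∪ G₂, fun i => if i ∈ G₁ then w i else p i,
    fun b => if b then U else V, ?_, ?_, by simpa using hUV, ?_, ?_⟩, ?_⟩
  · exact (Finset.filter_subset _ _).trans Finset.subset_union_left
  · intro i hi
    by_cases hiG : i ∈ G₁
    · simpa [hiG] using hi
    · simp [hiG]
  · intro w' hw'
    simpa using hG₁ w' fun i hi => by simpa [hi] using hw' i (Finset.mem_union_left _ hi)
  · intro w' hw'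
    simpa using hG₂ w' fun i hi => hw' i (Finset.mem_union_right _ hi)
  · rw [disjoint_left]
    intro i hi hiA
    exact (Finset.mem_filter.1 hi).2 (hw i hiA)

theorem Deviation.independentOn [CompactSpace X] {f : (I → X) → X} {p : I → X}
    {s : Set (Deviation f p)} (hs : s.Pairwise fun d d' => Disjoint d.F d'.G)
    (hunc : ¬ s.Countable) : IndependentOn (Set.univ : Set X) := by
  classical
  have : Uncountable s := by rwa [← not_countable_iff, countable_coe_iff]
  obtain ⟨g, hg⟩ := CountableOrdinal.exists_injective (ι := s)
  have hs' : ∀ i j, i ≠ j → Disjoint (g i).1.F (g j).1.G := fun i j hij =>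
    hs (g i).2 (g j).2 fun h => hij (hg (Subtype.ext h))
  refine independentOn_univ_of_finite (ι := CountableOrdinal.{u}) (fun i => (g i).1.U)
    (fun i => (g i).1.disjoint) fun E σ => ?_
  let w : I → X := fun i =>
    if h : ∃ j, σ j = true ∧ i ∈ (g j).1.F then (g h.choose).1.z i else p i
  have hw_of : ∀ j, σ j = true → ∀ i ∈ (g j).1.F, w i = (g j).1.z i := by
    intro j hj i hi
    have h : ∃ j, σ j = true ∧ i ∈ (g j).1.F := ⟨j, hj, hi⟩
    have hcj : h.choose = j := by
      by_contra hne
      exact Finset.disjoint_left.1 (hs' _ _ hne) h.choose_spec.2 ((g j).1.subset hi)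
    simp only [w, dif_pos h, hcj]
  have hw_not : ∀ i, (∀ j, σ j = true → i ∉ (g j).1.F) → w i = p i := by
    intro i hi
    have h : ¬ ∃ j, σ j = true ∧ i ∈ (g j).1.F := fun ⟨j, hj, hij⟩ => hi j hj hij
    simp only [w, dif_neg h]
  refine ⟨f w, fun j _ => ?_⟩
  cases hσ : σ j with
  | true =>
    refine (g j).1.mem_true w fun i hi => ?_
    by_cases hiF : i ∈ (g j).1.F
    · exact hw_of j hσ i hiF
    · rw [(g j).1.eq_of_notMem i hiF]
      refine hw_not i fun k _ hik => ?_
      have hkj : k ≠ j := by rintro rfl; exact hiF hik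
      exact Finset.disjoint_left.1 (hs' k j hkj) hik hi
  | false =>
    refine (g j).1.mem_false w fun i hi => hw_not i fun k hk hik => ?_
    have hkj : k ≠ j := by rintro rfl; simp [hσ] at hk
    exact Finset.disjoint_left.1 (hs' k j hkj) hik hi

theorem Deviation.nonempty {f : (I → X) → X} {p : I → X} (d : Deviation f p) : d.F.Nonempty := by
  rw [Finset.nonempty_iff_ne_empty]
  intro h
  have hz : ∀ i, p i = d.z i := fun i => (d.eq_of_notMem i (by simp [h])).symm
  exact disjoint_left.1 d.disjoint (subset_closure (d.mem_true p fun i _ => hz i))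
    (subset_closure (d.mem_false p fun i _ => rfl))

/-- In the absence of uncountable independent families, a continuous map on a power of `X` is,
at each point, determined by countably many coordinates. -/
theorem Continuous.exists_countable_support [CompactSpace X] [T2Space X]
    (hX : ¬ IndependentOn (Set.univ : Set X)) {f : (I → X) → X} (hf : Continuous f)
    (p : I → X) : ∃ A : Set I, A.Countable ∧ ∀ w, (∀ a ∈ A, w a = p a) → f w = f p := by
  by_contra! hno
  let r : Deviation f p × ℕ → Deviation f p × ℕ → Prop := fun x y =>
    Disjoint x.1.F y.1.F ∧ (x.2 = y.2 → Disjoint x.1.F y.1.G)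
  obtain ⟨s, hs⟩ := zorn_subset {s : Set (Deviation f p × ℕ) | s.Pairwise r} fun c hc hchain =>
    ⟨⋃₀ c, (pairwise_sUnion hchain.directedOn).2 hc, fun t ht => subset_sUnion_of_mem ht⟩
  have hsc : s.Countable := by
    have hslice : ∀ n : ℕ, {d | (d, n) ∈ s}.Countable := by
      intro n
      by_contra hunc
      refine hX (Deviation.independentOn (fun d hd d' hd' hne => ?_) hunc)
      exact (hs.prop hd hd' fun h => hne (congrArg Prod.fst h)).2 rfl
    refine (countable_iUnion fun n => (hslice n).image fun d => (d, n)).mono fun x hx => ?_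
    exact mem_iUnion.2 ⟨x.2, x.1, hx, rfl⟩
  obtain ⟨w, hw, hne⟩ := hno (⋃ x ∈ s, (x.1.G : Set I))
    (hsc.biUnion fun x _ => x.1.G.countable_toSet)
  obtain ⟨d, hd⟩ := Deviation.exists_disjoint hf hw hne
  have hdG : ∀ x ∈ s, Disjoint d.F x.1.G := fun x hx => by
    rw [← Finset.disjoint_coe]
    exact hd.mono_right (subset_biUnion_of_mem (u := fun x => (x.1.G : Set I)) hx)
  obtain ⟨n, hn⟩ : ∃ n, ∀ d', (d', n) ∈ s → Disjoint d'.F d.G := by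
    by_contra! hcon
    choose e hes he using hcon
    simp only [Finset.not_disjoint_iff] at he
    choose i hie hid using he
    refine not_injective_infinite_finite (fun n => (⟨i n, hid n⟩ : d.G)) fun n m hnm => ?_
    by_contra hne
    have him : i n = i m := congrArg Subtype.val hnm
    refine Finset.disjoint_left.1 (hs.prop (hes n) (hes m) fun h => hne (congrArg Prod.snd h)).1
      (hie n) ?_
    rw [him]
    exact hie m
  have hins : insert (d, n) s ∈ {s : Set (Deviation f p × ℕ) | s.Pairwise r} := by
    refine hs.prop.insert fun x hx _ => ⟨⟨(hdG x hx).mono_right x.1.subset, fun _ => hdG x hx⟩,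
      (hdG x hx).symm.mono_left x.1.subset |>.mono_right subset_rfl, fun hxn => ?_⟩
    obtain ⟨d', m⟩ := x
    obtain rfl : m = n := hxn
    exact hn d' hx
  have hmem : (d, n) ∈ s := hs.le_of_ge hins (subset_insert _ _) (mem_insert _ _)
  obtain ⟨i, hi⟩ := d.nonempty
  exact Finset.disjoint_left.1 (hdG _ hmem) hi (d.subset hi)

theorem Continuous.exists_tube [CompactSpace X] [T2Space X] {Y : Type*} [TopologicalSpace Y]
    {f : (I → X) → Y} (hf : Continuous f) {a : ℕ → I} {p : X} {x : Y}
    (h : ∀ w, (∀ n, w (a n) = p) → f w = x) {U : Set Y} (hU : IsOpen U) (hxU : x ∈ U) :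
    ∃ N : ℕ, ∃ O, IsOpen O ∧ p ∈ O ∧ ∀ w, (∀ n < N, w (a n) ∈ O) → f w ∈ U := by
  suffices hK : ∃ N : ℕ, ∃ O, IsOpen O ∧ p ∈ O ∧ ∀ w ∈ (f ⁻¹' U)ᶜ, ∃ n < N, w (a n) ∉ O by
    obtain ⟨N, O, hO, hpO, hNO⟩ := hK
    refine ⟨N, O, hO, hpO, fun w hw => ?_⟩
    by_contra hwU
    obtain ⟨n, hn, hwn⟩ := hNO w hwU
    exact hwn (hw n hn)
  refine (hU.preimage hf).isClosed_compl.isCompact.induction_on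
    (p := fun s => ∃ N : ℕ, ∃ O, IsOpen O ∧ p ∈ O ∧ ∀ w ∈ s, ∃ n < N, w (a n) ∉ O)
    ⟨0, Set.univ, isOpen_univ, mem_univ _, by simp⟩ ?_ ?_ ?_
  · rintro s t hst ⟨N, O, hO, hpO, hNO⟩
    exact ⟨N, O, hO, hpO, fun w hw => hNO w (hst hw)⟩
  · rintro s t ⟨N, O, hO, hpO, hNO⟩ ⟨M, P, hP, hpP, hMP⟩
    refine ⟨max N M, O ∩ P, hO.inter hP, ⟨hpO, hpP⟩, ?_⟩
    rintro w (hw | hw)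
    · obtain ⟨n, hn, hwn⟩ := hNO w hw
      exact ⟨n, lt_max_of_lt_left hn, fun h => hwn h.1⟩
    · obtain ⟨n, hn, hwn⟩ := hMP w hw
      exact ⟨n, lt_max_of_lt_right hn, fun h => hwn h.2⟩
  · intro w hw
    obtain ⟨n, hn⟩ : ∃ n, w (a n) ≠ p := by
      by_contra! hcon
      exact hw (by rwa [mem_preimage, h w hcon])
    obtain ⟨P, O, hP, hO, hwP, hpO, hPO⟩ := t2_separation hn
    exact ⟨{w | w (a n) ∈ P}, mem_nhdsWithin_of_mem_nhds
      ((hP.preimage (continuous_apply (a n))).mem_nhds hwP), n + 1, O, hO, hpO,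
      fun w' hw' => ⟨n, n.lt_succ_self, disjoint_left.1 hPO hw'⟩⟩

end Support

section PowerHomogeneous

variable {X : Type u} [TopologicalSpace X]

/-- In a power homogeneous compactum, a countable local π-base at one point can be transported to
all points simultaneously. -/
theorem PowerHomogeneous.exists_coherent_piBase [CompactSpace X] [T2Space X]
    (hph : PowerHomogeneous X)
    (hX : ¬ IndependentOn (Set.univ : Set X)) :
    ∃ P : X → ℕ × ℕ → Set X, (∀ x k, IsOpen (P x k) ∧ (P x k).Nonempty) ∧
      ∀ x y U U', IsOpen U → IsOpen U' → x ∈ U → y ∈ U' → ∃ k, P x k ⊆ U ∧ P y k ⊆ U' := by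
  obtain hempty | hne := isEmpty_or_nonempty X
  · exact ⟨fun x => isEmptyElim x, fun x => isEmptyElim x, fun x => isEmptyElim x⟩
  obtain ⟨I, ⟨i₀⟩, hhom⟩ := hph
  obtain ⟨p, V, hV, hpV⟩ := exists_hasCountablePiBaseAt hX
  choose h hh using fun x => hhom (fun _ => p) fun _ => x
  have hcont : ∀ x, Continuous fun w => h x w i₀ := fun x =>
    (continuous_apply i₀).comp (h x).continuous
  have hopen : ∀ x, IsOpenMap fun w => h x w i₀ := fun x =>
    (isOpenMap_eval i₀).comp (h x).isOpenMap
  have hsupp : ∀ x, ∃ a : ℕ → I, ∀ w, (∀ n, w (a n) = p) → h x w i₀ = x := by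
    intro x
    obtain ⟨A, hA, hAx⟩ := (hcont x).exists_countable_support hX fun _ => p
    obtain ⟨a, ha⟩ := (hA.insert i₀).exists_eq_range (insert_nonempty _ _)
    refine ⟨a, fun w hw => (hAx w fun i hi => ?_).trans (congrFun (hh x) i₀)⟩
    obtain ⟨n, rfl⟩ := ha.le (mem_insert_of_mem _ hi)
    exact hw n
  choose a ha using hsupp
  refine ⟨fun x k => (fun w => h x w i₀) '' {w | ∀ n < k.1, w (a x n) ∈ V k.2}, fun x k =>
    ⟨hopen x _ ?_, ?_⟩, fun x y U U' hU hU' hxU hyU' => ?_⟩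
  · have : {w : I → X | ∀ n < k.1, w (a x n) ∈ V k.2} =
        ⋂ n ∈ Finset.range k.1, (fun w : I → X => w (a x n)) ⁻¹' V k.2 := by
      ext w; simp
    rw [this]
    exact isOpen_biInter_finset fun n _ => (hV k.2).1.preimage (continuous_apply _)
  · obtain ⟨v, hv⟩ := (hV k.2).2
    exact ⟨_, fun _ => v, fun _ _ => hv, rfl⟩
  · obtain ⟨N, O, hO, hpO, hN⟩ := (hcont x).exists_tube (ha x) hU hxU
    obtain ⟨M, O', hO', hpO', hM⟩ := (hcont y).exists_tube (ha y) hU' hyU'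
    obtain ⟨m, hm⟩ := hpV (O ∩ O') (hO.inter hO') ⟨hpO, hpO'⟩
    refine ⟨(max N M, m), ?_, ?_⟩
    · rintro _ ⟨w, hw, rfl⟩
      exact hN w fun n hn => (hm (hw n (lt_max_of_lt_left hn))).1
    · rintro _ ⟨w, hw, rfl⟩
      exact hM w fun n hn => (hm (hw n (lt_max_of_lt_right hn))).2

theorem mk_le_continuum_of_dense [T2Space X] {P : X → ℕ × ℕ → Set X}
    (hP : ∀ x k, IsOpen (P x k) ∧ (P x k).Nonempty)
    (hPP : ∀ x y U U', IsOpen U → IsOpen U' → x ∈ U → y ∈ U' → ∃ k, P x k ⊆ U ∧ P y k ⊆ U')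
    {Y : Set X} (hY : Dense Y) (hYc : #Y ≤ 𝔠) : #X ≤ 𝔠 := by
  choose d hdP hdY using fun x k => hY.inter_open_nonempty _ (hP x k).1 (hP x k).2
  have hinj : Function.Injective fun (x : X) (k : ℕ × ℕ) => (⟨d x k, hdY x k⟩ : Y) := by
    intro x y hxy
    by_contra hne
    obtain ⟨U, U', hU, hU', hxU, hyU', hUU'⟩ := t2_separation hne
    obtain ⟨k, hk, hk'⟩ := hPP x y U U' hU hU' hxU hyU'
    have hdk : d x k = d y k := congrArg Subtype.val (congrFun hxy k)
    exact disjoint_left.1 hUU' (hk (hdP x k)) (hdk ▸ hk' (hdP y k))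
  refine (mk_le_of_injective hinj).trans ?_
  simp only [mk_pi, prod_const, lift_uzero, mk_eq_aleph0, lift_aleph0]
  rw [← continuum_power_aleph0]
  exact power_le_power_right hYc

theorem exists_countable_dense_traces {P : X → ℕ × ℕ → Set X}
    (hP : ∀ x k, IsOpen (P x k) ∧ (P x k).Nonempty)
    (hPP : ∀ x y U U', IsOpen U → IsOpen U' → x ∈ U → y ∈ U' → ∃ k, P x k ⊆ U ∧ P y k ⊆ U')
    {𝒞 : Set (Set X)} (hc : 𝒞.Countable) (hd : ∀ C ∈ 𝒞, Dense C) :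
    ∃ E : X → Set X, ∀ y, (E y).Countable ∧ ∀ C ∈ 𝒞, y ∈ closure (E y ∩ C) := by
  choose d hdP hdC using fun x k (C : 𝒞) =>
    (hd C C.2).inter_open_nonempty _ (hP x k).1 (hP x k).2
  have := hc.to_subtype
  refine ⟨fun y => range fun q : (ℕ × ℕ) × 𝒞 => d y q.1 q.2, fun y => ⟨countable_range _,
    fun C hC => mem_closure_iff.2 fun U hU hyU => ?_⟩⟩
  obtain ⟨k, hk, -⟩ := hPP y y U U hU hU hyU hyU
  exact ⟨d y k ⟨C, hC⟩, hk (hdP _ _ _), ⟨(k, ⟨C, hC⟩), rfl⟩, hdC y k ⟨C, hC⟩⟩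

theorem exists_countable_mem_closure {𝒞 : Set (Set X)} (hcov : ⋃₀ 𝒞 = Set.univ)
    (ht : ∀ C ∈ 𝒞, CountablyTight C) {E : X → Set X} (hE : ∀ y, ∀ C ∈ 𝒞, y ∈ closure (E y ∩ C))
    {S : Set X} (hS : ∀ y ∈ S, E y ⊆ S) {z : X} (hz : z ∈ closure S) :
    ∃ B ⊆ S, B.Countable ∧ z ∈ closure B := by
  obtain ⟨C, hC, hzC⟩ := mem_sUnion.1 (hcov.ge (mem_univ z))
  have hSC : S ⊆ closure (S ∩ C) := fun y hy =>
    closure_mono (inter_subset_inter_left _ (hS y hy)) (hE y C hC)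
  obtain ⟨B, hB, hBc, hzB⟩ := ht C hC (S ∩ C) inter_subset_right z hzC
    (closure_minimal hSC isClosed_closure hz)
  exact ⟨B, hB.trans inter_subset_left, hBc, hzB⟩

theorem nonempty_iInter_of_decreasing [CompactSpace X] [Nonempty X] {ι : Type*} [LinearOrder ι]
    {K : ι → Set X} (hK : ∀ i, IsClosed (K i)) (hne : ∀ i, (K i).Nonempty) (hanti : Antitone K) :
    (⋂ i, K i).Nonempty := by
  refine CompactSpace.iInter_nonempty hK fun E => ?_
  obtain rfl | hE := E.eq_empty_or_nonempty
  · simp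
  · obtain ⟨x, hx⟩ := hne (E.max' hE)
    exact ⟨x, mem_iInter₂.2 fun i hi => hanti (E.le_max' i hi) hx⟩

theorem exists_subseparable_closed_isGδ [CompactSpace X] [T2Space X] [Nonempty X]
    {𝒞 : Set (Set X)} (hcov : ⋃₀ 𝒞 = Set.univ) (ht : ∀ C ∈ 𝒞, CountablyTight C) {E : X → Set X}
    (hEc : ∀ y, (E y).Countable) (hE : ∀ y, ∀ C ∈ 𝒞, y ∈ closure (E y ∩ C)) :
    ∃ K : Set X, K.Nonempty ∧ IsClosed K ∧ IsGδ K ∧ ∃ D : Set X, D.Countable ∧ K ⊆ closure D := by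
  classical
  by_contra! hno
  choose E' hE'c hE'y hE' using fun y => exists_countable_closed_s17
    (fun G : Finset X => ⋃ y ∈ G, E y) (fun G => G.countable_toSet.biUnion fun y _ => hEc y)
    {y} (countable_singleton y)
  let Good : Set (X × Set X) → X × Set X → Prop := fun 𝒮 q =>
    IsClosed q.2 ∧ IsGδ q.2 ∧ q.1 ∈ q.2 ∧ (∀ r ∈ 𝒮, q.2 ⊆ r.2) ∧
      Disjoint q.2 (closure (⋃ r ∈ 𝒮, E' r.1))
  have x₀ : X := Classical.arbitrary X
  obtain ⟨F, hF⟩ := CountableOrdinal.exists_rec.{u} fun 𝒮 : Set (X × Set X) =>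
    if h : ∃ q, Good 𝒮 q then h.choose else (x₀, ∅)
  have hgood : ∀ a, Good (F '' Iio a) (F a) := by
    intro a
    induction a using WellFoundedLT.induction with
    | ind a ih =>
      suffices h : ∃ q, Good (F '' Iio a) q by
        rw [hF, dif_pos h]
        exact h.choose_spec
      have hcount := CountableOrdinal.countable_Iio a
      have := hcount.to_subtype
      obtain ⟨M, hMdef⟩ : ∃ M, M = ⋂ b : Iio a, (F b).2 := ⟨_, rfl⟩
      have hMne : M.Nonempty := by
        rw [hMdef]
        refine nonempty_iInter_of_decreasing (fun b => (ih b b.2).1)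
          (fun b => ⟨_, (ih b b.2).2.2.1⟩) fun b b' hbb' => ?_
        obtain rfl | hlt := hbb'.eq_or_lt
        · exact le_rfl
        · exact (ih b' b'.2).2.2.2.1 _ (mem_image_of_mem F hlt)
      have hMc : IsClosed M := hMdef ▸ isClosed_iInter fun b => (ih b b.2).1
      have hMG : IsGδ M := hMdef ▸ .iInter fun b => (ih b b.2).2.1
      obtain ⟨k, hkM, hk⟩ := not_subset.1 <| hno M hMne hMc hMG (⋃ r ∈ F '' Iio a, E' r.1)
        ((hcount.image F).biUnion fun r _ => hE'c r.1)
      obtain ⟨g, hg0, hg1, -⟩ := exists_continuous_zero_one_of_isClosed isClosed_closure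
        isClosed_singleton (disjoint_singleton_right.2 hk)
      refine ⟨(k, M ∩ g ⁻¹' {1}), hMc.inter (isClosed_singleton.preimage g.continuous),
        hMG.inter ((IsGδ.singleton 1).preimage g.continuous), ⟨hkM, hg1 rfl⟩, ?_, ?_⟩
      · rintro _ ⟨b, hb, rfl⟩
        exact inter_subset_left.trans (hMdef ▸ iInter_subset (fun b : Iio a => (F b).2) ⟨b, hb⟩)
      · rw [disjoint_left]
        rintro x ⟨-, hx1⟩ hx
        have h0 := hg0 hx
        rw [mem_preimage, mem_singleton_iff] at hx1
        simp [hx1] at h0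
  obtain ⟨S, hSdef⟩ : ∃ S, S = ⋃ a, E' (F a).1 := ⟨_, rfl⟩
  have hkS : ∀ a, (F a).1 ∈ S := fun a => hSdef ▸ mem_iUnion.2 ⟨a, hE'y _ rfl⟩
  have hS : ∀ y ∈ S, E y ⊆ S := by
    rw [hSdef]
    intro y hy
    obtain ⟨a, ha⟩ := mem_iUnion.1 hy
    have := hE' (F a).1 {y} (by simpa using ha)
    simp only [Finset.mem_singleton, iUnion_iUnion_eq_left] at this
    exact this.trans (subset_iUnion (fun a => E' (F a).1) a)
  obtain ⟨z, hz⟩ := nonempty_iInter_of_decreasing (K := fun a => closure S ∩ (F a).2)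
    (fun a => isClosed_closure.inter (hgood a).1)
    (fun a => ⟨_, subset_closure (hkS a), (hgood a).2.2.1⟩) fun b b' hbb' => by
      obtain rfl | hlt := hbb'.eq_or_lt
      · exact le_rfl
      · exact inter_subset_inter_right _ ((hgood b').2.2.2.1 _ (mem_image_of_mem F hlt))
  rw [mem_iInter] at hz
  obtain ⟨a₀⟩ : Nonempty CountableOrdinal.{u} := inferInstance
  obtain ⟨B, hBS, hBc, hzB⟩ := exists_countable_mem_closure hcov ht hE hS (hz a₀).1
  rw [hSdef] at hBS
  choose! r hr using fun x (hx : x ∈ B) => mem_iUnion.1 (hBS hx)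
  obtain ⟨a, ha⟩ := CountableOrdinal.exists_forall_lt (hBc.image r)
  refine disjoint_left.1 (hgood a).2.2.2.2 (hz a).2 (closure_mono (fun x hx => ?_) hzB)
  exact mem_biUnion (mem_image_of_mem F (ha _ (mem_image_of_mem r hx))) (hr x hx)

/-- In a power homogeneous compactum without uncountable independent families, a nonempty
subseparable closed `Gδ` yields one around every point. -/
theorem PowerHomogeneous.exists_subseparable_closed_isGδ_mem [CompactSpace X] [T2Space X]
    (hph : PowerHomogeneous X) (hX : ¬ IndependentOn (Set.univ : Set X)) {K D : Set X}
    (hKne : K.Nonempty) (hK : IsClosed K) (hKG : IsGδ K) (hD : D.Countable)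
    (hKD : K ⊆ closure D) (x : X) :
    ∃ L : Set X, x ∈ L ∧ IsClosed L ∧ IsGδ L ∧ ∃ D' : Set X, D'.Countable ∧ L ⊆ closure D' := by
  classical
  obtain ⟨I, ⟨i₀⟩, hhom⟩ := hph
  obtain ⟨q, hq⟩ := hKne
  obtain ⟨h, hh⟩ := hhom (fun _ => q) fun _ => x
  have hcont : Continuous fun w => h w i₀ := (continuous_apply i₀).comp h.continuous
  choose A hAc hA using fun w => hcont.exists_countable_support hX w
  let d : ∀ G : Finset I, (G → D) → I → X := fun G u i => if hi : i ∈ G then u ⟨i, hi⟩ else q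
  have hDc := hD.to_subtype
  obtain ⟨S, hSc, -, hS⟩ := exists_countable_closed_s17
    (fun G : Finset I => ⋃ u : G → D, A (d G u))
    (fun G => countable_iUnion fun u => hAc _) ∅ countable_empty
  have hScc := hSc.to_subtype
  have hLcont : ∀ a : I, Continuous fun y => h.symm (Function.update (fun _ => x) i₀ y) a :=
    fun a => (continuous_apply a).comp <| h.symm.continuous.comp <|
      continuous_const.update i₀ continuous_id
  refine ⟨⋂ a : S, (fun y => h.symm (Function.update (fun _ => x) i₀ y) a) ⁻¹' K, ?_,
    isClosed_iInter fun a => hK.preimage (hLcont a), .iInter fun a => hKG.preimage (hLcont a),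
    ⋃ G ∈ {G : Finset I | (G : Set I) ⊆ S}, range fun u : G → D => h (d G u) i₀,
    hSc.finset_subsets.biUnion fun G _ => countable_range _, fun y hy => ?_⟩
  · refine mem_iInter.2 fun a => ?_
    have hsymm : h.symm (fun _ => x) = fun _ => q := by rw [← hh, h.symm_apply_apply]
    rw [mem_preimage, Function.update_eq_self i₀ fun _ => x, hsymm]
    exact hq
  · rw [mem_closure_iff]
    intro U hU hyU
    set w := h.symm (Function.update (fun _ => x) i₀ y) with hw
    have hwy : h w i₀ = y := by simp [hw]
    have hwK : ∀ a ∈ S, w a ∈ K := fun a ha => mem_iInter.1 hy ⟨a, ha⟩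
    obtain ⟨G, O, hO, hGU⟩ := isOpen_pi_iff.1 (hU.preimage hcont) w
      (by rwa [mem_preimage, hwy])
    let G' : Finset I := {i ∈ G | i ∈ S}
    have hG'S : (G' : Set I) ⊆ S := fun i hi => (Finset.mem_filter.1 hi).2
    have hu : ∀ i : G', ∃ e : D, e.1 ∈ O i := fun i => by
      have hiG := (Finset.mem_filter.1 i.2).1
      obtain ⟨e, he, heD⟩ := mem_closure_iff.1 (hKD (hwK i (hG'S i.2))) _ (hO i hiG).1 (hO i hiG).2
      exact ⟨⟨e, heD⟩, he⟩
    choose u hu using hu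
    refine ⟨h (d G' u) i₀, ?_, mem_biUnion (show G' ∈ {G : Finset I | (G : Set I) ⊆ S} from hG'S)
      (mem_range_self u)⟩
    have hAS : A (d G' u) ⊆ S := (subset_iUnion (fun u => A (d G' u)) u).trans (hS G' hG'S)
    have heq := hA (d G' u) (fun i => if i ∈ S then d G' u i else w i) fun a ha => by
      simp [hAS ha]
    rw [← heq]
    refine hGU fun i hi => ?_
    by_cases hiS : i ∈ S
    · have hiG' : i ∈ G' := Finset.mem_filter.2 ⟨hi, hiS⟩
      simpa [hiS, d, hiG'] using hu ⟨i, hiG'⟩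
    · simpa [hiS] using (hO i hi).2

theorem IsClosed.exists_iInter_closure_eq [NormalSpace X] {L : Set X} (hL : IsClosed L)
    (hLG : IsGδ L) : ∃ O : ℕ → Set X, (∀ n, IsOpen (O n)) ∧ (∀ n, L ⊆ O n) ∧
      ⋂ n, closure (O n) ⊆ L := by
  obtain ⟨U, hU, rfl⟩ := isGδ_iff_eq_iInter_nat.1 hLG
  choose O hO hLO hOU using fun n => normal_exists_closure_subset hL (hU n) (iInter_subset U n)
  exact ⟨O, hO, hLO, iInter_mono hOU⟩

theorem exists_dense_mk_le_continuum [CompactSpace X] [T2Space X] {𝒞 : Set (Set X)}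
    (hcov : ⋃₀ 𝒞 = Set.univ) (ht : ∀ C ∈ 𝒞, CountablyTight C) {E : X → Set X}
    (hEc : ∀ y, (E y).Countable) (hE : ∀ y, ∀ C ∈ 𝒞, y ∈ closure (E y ∩ C))
    (hL : ∀ x : X, ∃ L : Set X, x ∈ L ∧ IsClosed L ∧ IsGδ L ∧
      ∃ D : Set X, D.Countable ∧ L ⊆ closure D) :
    ∃ Y : Set X, Dense Y ∧ #Y ≤ 𝔠 := by
  obtain hempty | hne := isEmpty_or_nonempty X
  · exact ⟨∅, fun x => isEmptyElim x, by simp⟩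
  choose L hxL hLc hLG D hDc hLD using hL
  choose O hO hLO hOL using fun x => (hLc x).exists_iInter_closure_eq (hLG x)
  have hpt : ∀ G : Finset (X × ℕ), ∃ z, ∀ q, q ∉ ⋃ k ∈ G, O k.1 k.2 → z ∉ ⋃ k ∈ G, O k.1 k.2 := by
    intro G
    by_cases h : ∃ q, q ∉ ⋃ k ∈ G, O k.1 k.2
    · exact ⟨h.choose, fun _ _ => h.choose_spec⟩
    · exact ⟨Classical.arbitrary X, fun q hq => absurd ⟨q, hq⟩ h⟩
  choose pt hpt using hpt
  let code : ∀ B : Set X, X → ℕ → Set B := fun B y n => Subtype.val ⁻¹' O y n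
  let φ : Set X → Set X := fun B => ((⋃ y ∈ B, (E y ∪ D y)) ∪
    pt '' {G | (G : Set (X × ℕ)) ⊆ B ×ˢ Set.univ}) ∪ range (Function.invFun (code B))
  have hφ : ∀ B : Set X, B.Countable → #(φ B) ≤ 𝔠 := by
    intro B hB
    refine (mk_union_le _ _).trans ((add_le_add (Set.Countable.mk_le_continuum ?_) ?_).trans
      continuum_add_self.le)
    · exact (hB.biUnion fun y _ => (hEc y).union (hDc y)).union
        ((hB.prod countable_univ).finset_subsets.image _)
    · refine mk_range_le.trans ?_
      have h2 : #(Set B) ≤ 𝔠 := by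
        rw [mk_set, ← two_power_aleph0]
        exact power_le_power_left two_ne_zero hB.le_aleph0
      simp only [mk_pi, prod_const, lift_uzero, mk_eq_aleph0, lift_aleph0]
      rw [← continuum_power_aleph0]
      exact power_le_power_right h2
  obtain ⟨Y, hYc, hY⟩ := exists_closed_of_countable_subsets φ hφ
  have hsub : ∀ y ∈ Y, E y ∪ D y ⊆ Y := fun y hy => by
    refine subset_trans ?_ (hY {y} (singleton_subset_iff.2 hy) (countable_singleton y))
    refine subset_union_of_subset_left (subset_union_of_subset_left ?_ _) _
    exact subset_biUnion_of_mem (u := fun y => E y ∪ D y) (mem_singleton y)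
  have hcl : ∀ z ∈ closure Y, ∃ y ∈ Y, z ∈ L y := by
    intro z hz
    obtain ⟨B, hBY, hBc, hzB⟩ := exists_countable_mem_closure hcov ht hE
      (fun y hy => subset_union_left.trans (hsub y hy)) hz
    have hcode : code B (Function.invFun (code B) (code B z)) = code B z :=
      Function.invFun_eq ⟨z, rfl⟩
    refine ⟨Function.invFun (code B) (code B z), hY B hBY hBc (.inr (mem_range_self _)),
      hOL _ (mem_iInter.2 fun n => ?_)⟩
    have hzO : z ∈ closure (O z n ∩ B) :=
      (hO z n).inter_closure ⟨hLO z n (hxL z), hzB⟩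
    refine closure_mono (fun b hb => ?_) hzO
    have := (congrFun hcode n).ge (show (⟨b, hb.2⟩ : B) ∈ code B z n from hb.1)
    exact this
  refine ⟨Y, fun q => ?_, hYc⟩
  by_contra hq
  have hcover : closure Y ⊆ ⋃ k ∈ {k : X × ℕ | k.1 ∈ Y ∧ q ∉ O k.1 k.2}, O k.1 k.2 := by
    intro z hz
    obtain ⟨y, hy, hzy⟩ := hcl z hz
    have hqL : q ∉ L y := fun h => hq <|
      closure_mono (subset_union_right.trans (hsub y hy)) (hLD y h)
    obtain ⟨n, hn⟩ : ∃ n, q ∉ O y n := by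
      by_contra! hcon
      exact hqL (hOL y (mem_iInter.2 fun n => subset_closure (hcon n)))
    exact mem_biUnion (show (y, n) ∈ {k : X × ℕ | k.1 ∈ Y ∧ q ∉ O k.1 k.2} from ⟨hy, hn⟩)
      (hLO y n hzy)
  obtain ⟨b, hb, hbf, hbY⟩ := isClosed_closure.isCompact.elim_finite_subcover_image
    (fun k _ => hO k.1 k.2) hcover
  lift b to Finset (X × ℕ) using hbf
  have hqb : q ∉ ⋃ k ∈ b, O k.1 k.2 := fun h => by
    obtain ⟨k, hk, hqk⟩ := mem_iUnion₂.1 h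
    exact (hb hk).2 hqk
  refine hpt b q hqb (hbY (subset_closure ?_))
  refine hY (Prod.fst '' (b : Set (X × ℕ))) (image_subset_iff.2 fun k hk => (hb hk).1)
    (b.countable_toSet.image _) (.inl (.inr ⟨b, fun k hk => ?_, rfl⟩))
  exact ⟨mem_image_of_mem _ hk, mem_univ _⟩

end PowerHomogeneous

/-- Theorem 4.6. -/
theorem stmt17 {X : Type u} [TopologicalSpace X] [CompactSpace X] [T2Space X]
    (hph : PowerHomogeneous X) (𝒞 : Set (Set X)) (hctble : 𝒞.Countable)
    (hcov : ⋃₀ 𝒞 = Set.univ)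
    (h : ∀ C ∈ 𝒞, tightness ↥C ≤ ℵ₀ ∧ Dense C) :
    #X ≤ Cardinal.continuum := by
  obtain hempty | hne := isEmpty_or_nonempty X
  · simp
  have ht : ∀ C ∈ 𝒞, CountablyTight C := fun C hC => countablyTight_of_tightness_le (h C hC).1
  have hX := not_independentOn_univ hctble hcov ht
  obtain ⟨P, hP, hPP⟩ := hph.exists_coherent_piBase hX
  obtain ⟨E, hE⟩ := exists_countable_dense_traces hP hPP hctble fun C hC => (h C hC).2
  obtain ⟨K, hKne, hK, hKG, D, hD, hKD⟩ := exists_subseparable_closed_isGδ hcov ht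
    (fun y => (hE y).1) fun y => (hE y).2
  obtain ⟨Y, hY, hYc⟩ := exists_dense_mk_le_continuum hcov ht (fun y => (hE y).1)
    (fun y => (hE y).2) (hph.exists_subseparable_closed_isGδ_mem hX hKne hK hKG hD hKD)
  exact mk_le_continuum_of_dense hP hPP hY hYc
end
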